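/- Let ⟦a_1, a_2, …, a_m⟧ denote the MV assignment M^{a_1} V^{a_2} M^{a_3} ⋯ consisting of m alternating blocks with positive sizes a_1, …, a_m (the first block being mountains), on the 1×(1 + a_1 + ⋯ + a_m) strip of stamps. Then a_1 · ∏_{i=2}^{m} min(a_{i−1}+1, a_i) ≤ c(⟦a_1, a_2, …, a_m⟧) ≤ a_1 · ∏_{i=2}^{m} (a_i + 2·Σ_{j=1}^{i−1} a_j). -/

import Mathlib

/-- A crease direction: mountain or valley. -/
inductive MV : Type
  | M : MV
  | V : MV
deriving DecidableEq

/-- The value `σ(i)` of a layer ordering at face `i`, as a natural number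
(`0` if `i` is out of range). -/
def faceVal {n : ℕ} (σ : Equiv.Perm (Fin n)) (i : ℕ) : ℕ :=
  if h : i < n then (σ ⟨i, h⟩ : Fin n) else 0

/-- Condition (1): the layer ordering respects the mountain–valley assignment. -/
def MVRelations (n : ℕ) (μ : ℕ → MV) (σ : Equiv.Perm (Fin n)) : Prop :=
  ∀ i, i + 1 < n →
    if (μ i = MV.M ∧ Even i) ∨ (μ i = MV.V ∧ Odd i)
    then faceVal σ (i + 1) < faceVal σ i
    else faceVal σ i < faceVal σ (i + 1)

/-- `x` lies strictly between `lo` and `hi` (in either order). -/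
def StrictlyBetween (x a b : ℕ) : Prop := min a b < x ∧ x < max a b

/-- Condition (2): no two creases on the same side cross. -/
def NoCrossings (n : ℕ) (σ : Equiv.Perm (Fin n)) : Prop :=
  ∀ i j, i + 1 < n → j + 1 < n → i % 2 = j % 2 →
    ¬ Xor' (StrictlyBetween (faceVal σ j) (faceVal σ i) (faceVal σ (i + 1)))
           (StrictlyBetween (faceVal σ (j + 1)) (faceVal σ i) (faceVal σ (i + 1)))

/-- A valid layer ordering for the MV assignment `μ` on the `1 × n` strip. -/
def ValidLayerOrdering (n : ℕ) (μ : ℕ → MV) (σ : Equiv.Perm (Fin n)) : Prop :=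
  MVRelations n μ σ ∧ NoCrossings n σ

/-- `c(μ)`: the number of valid layer orderings for `μ` on the `1 × n` strip. -/
noncomputable def foldCount (n : ℕ) (μ : ℕ → MV) : ℕ :=
  Nat.card {σ : Equiv.Perm (Fin n) // ValidLayerOrdering n μ σ}

/-- The MV assignment `⟦a_0, a_1, …, a_{m−1}⟧` with `m` alternating blocks of sizes
`a 0, …, a (m−1)`: crease `k` lies in block `t`, where `t` is the largest index with
`a 0 + ⋯ + a (t−1) ≤ k`; even-indexed blocks are mountains and odd-indexed blocks
are valleys. -/
def blockAssignment (m : ℕ) (a : ℕ → ℕ) : ℕ → MV := fun k =>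
  if Even (Nat.findGreatest (fun t => ∑ j ∈ Finset.range t, a j ≤ k) m) then MV.M else MV.V


/-- `p` lies strictly between `a` and `b`. -/
def Bt (p a b : ℤ) : Prop := (a < p ∧ p < b) ∨ (b < p ∧ p < a)

/-- Order agreement of `x` and `y` on the indices in `[s, n)`. -/
def Ag (x y : ℕ → ℤ) (s n : ℕ) : Prop :=
  ∀ a b, s ≤ a → a < n → s ≤ b → b < n → (x a < x b ↔ y a < y b)

/-- Noncrossing injective sequence on `[0,n)` that turns the same way from index `c` on. -/
structure Sp (c n : ℕ) (x : ℕ → ℤ) : Prop where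
  inj : ∀ i j, i < n → j < n → i ≠ j → x i ≠ x j
  nc : ∀ i j, i + 1 < n → j + 1 < n → i % 2 = j % 2 →
    (Bt (x j) (x i) (x (i + 1)) ↔ Bt (x (j + 1)) (x i) (x (i + 1)))
  alt : ∀ i, c ≤ i → i + 2 < n → (x i < x (i + 1) ↔ x (i + 2) < x (i + 1))

theorem Sp.neg {c n : ℕ} {x : ℕ → ℤ} (h : Sp c n x) : Sp c n (fun i => - x i) := by
  refine ⟨fun i j hi hj hij => ?_, fun i j hi hj hij => ?_, fun i hi hin => ?_⟩
  · have := h.inj i j hi hj hij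
    simp only [ne_eq, neg_inj]; exact this
  · have := h.nc i j hi hj hij
    simp only [Bt] at this ⊢
    omega
  · have := h.alt i hi hin
    have h1 := h.inj i (i+1) (by omega) (by omega) (by omega)
    have h2 := h.inj (i+2) (i+1) (by omega) (by omega) (by omega)
    try simp only
    omega

theorem Sp.mono {c n n' : ℕ} {x : ℕ → ℤ} (h : Sp c n x) (hn : n' ≤ n) : Sp c n' x :=
  ⟨fun i j hi hj hij => h.inj i j (by omega) (by omega) hij,
   fun i j hi hj hij => h.nc i j (by omega) (by omega) hij,
   fun i hi hin => h.alt i hi (by omega)⟩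

theorem Ag.symm {x y : ℕ → ℤ} {s n : ℕ} (h : Ag x y s n) : Ag y x s n :=
  fun a b h1 h2 h3 h4 => (h a b h1 h2 h3 h4).symm

theorem Ag.trans {x y z : ℕ → ℤ} {s n : ℕ} (h : Ag x y s n) (h' : Ag y z s n) : Ag x z s n :=
  fun a b h1 h2 h3 h4 => (h a b h1 h2 h3 h4).trans (h' a b h1 h2 h3 h4)

theorem Ag.mono {x y : ℕ → ℤ} {s n s' n' : ℕ} (h : Ag x y s n) (hs : s ≤ s') (hn : n' ≤ n) :
    Ag x y s' n' :=
  fun a b h1 h2 h3 h4 => h a b (by omega) (by omega) (by omega) (by omega)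

theorem Ag.neg {x y : ℕ → ℤ} {s n : ℕ} (h : Ag x y s n) :
    Ag (fun i => - x i) (fun i => - y i) s n := by
  intro a b h1 h2 h3 h4
  have := h b a h3 h4 h1 h2
  try simp only
  omega

theorem inward0 {c n : ℕ} {x : ℕ → ℤ} (h : Sp c n x) {i : ℕ} (hc : c ≤ i) (hn : i + 3 < n)
    (hb : Bt (x (i + 2)) (x i) (x (i + 1))) : Bt (x (i + 3)) (x (i + 1)) (x (i + 2)) := by
  have h1 := h.nc i (i+2) (by omega) (by omega) (by omega)
  have h2 := h.alt (i+1) (by omega) (by omega)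
  have h3 := h.inj (i+3) (i+2) (by omega) (by omega) (by omega)
  simp only [Bt, Nat.add_assoc, Nat.reduceAdd] at *
  omega

/-- Once turned inward, the spiral is trapped. -/
theorem inward {c n : ℕ} {x : ℕ → ℤ} (h : Sp c n x) {i : ℕ} (hc : c ≤ i)
    (hb : Bt (x (i + 2)) (x i) (x (i + 1))) (d : ℕ) (hd : i + d + 2 < n) :
    Bt (x (i + d + 2)) (x (i + d)) (x (i + d + 1)) ∧
    min (x (i+1)) (x (i+2)) ≤ x (i + d + 1) ∧ x (i + d + 1) ≤ max (x (i+1)) (x (i+2)) ∧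
    min (x (i+1)) (x (i+2)) ≤ x (i + d + 2) ∧ x (i + d + 2) ≤ max (x (i+1)) (x (i+2)) := by
  induction d with
  | zero => refine ⟨hb, ?_⟩; simp
  | succ d ih =>
    obtain ⟨h1, h2⟩ := ih (by omega)
    have h3 := inward0 h (i := i + d) (by omega) (by omega) h1
    have e1 : i + (d+1) + 2 = i + d + 3 := by omega
    have e2 : i + (d+1) + 1 = i + d + 2 := by omega
    have e3 : i + (d+1) = i + d + 1 := by omega
    rw [e1, e2, e3]
    refine ⟨h3, ?_⟩
    simp only [Bt] at *
    omega

theorem inward_last {c n : ℕ} {x : ℕ → ℤ} (h : Sp c n x) {i : ℕ} (hc : c ≤ i)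
    (hb : Bt (x (i + 2)) (x i) (x (i + 1))) (m : ℕ) (hm : i + 1 ≤ m) (hn : m < n) (hin : i + 2 < n) :
    min (x (i+1)) (x (i+2)) ≤ x m ∧ x m ≤ max (x (i+1)) (x (i+2)) := by
  rcases Nat.lt_or_ge m (i+2) with h1 | h1
  · have : m = i + 1 := by omega
    subst this; simp
  · obtain ⟨d, rfl⟩ := Nat.exists_eq_add_of_le h1
    have := inward h hc hb d (by omega)
    have e : i + 2 + d = i + d + 2 := by omega
    rw [e]; exact this.2.2.2

/-- Core of the deletion step. -/
theorem stepCore {c n : ℕ} {x y : ℕ → ℤ} (hx : Sp c n x) (hy : Sp c n y) {j : ℕ} (hj : j < c)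
    (hag : Ag x y (j + 1) n) (hold : Ag x y 0 (c + 1))
    (hlast : x (n - 1) < x j ↔ y (n - 1) < y j) :
    ∀ i, ¬ (c < i ∧ i < n ∧ x i < x j ∧ y j < y i) := by
  by_contra hcon
  push Not at hcon
  classical
  obtain ⟨hc0, hn0, hx0, hy0⟩ := Nat.find_spec hcon
  have hmin := fun m (hm : m < Nat.find hcon) => Nat.find_min hcon hm
  set i0 := Nat.find hcon
  -- closure
  have hbad : ∀ i', j < i' → i' < n → ¬ (x j < x i' ∧ y i' < y j) := by
    intro i' h1 h2 h3
    have := hag i0 i' (by omega) hn0 (by omega) h2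
    omega
  have hcl : ∀ i i', c < i → i < n → x i < x j → y j < y i → c ≤ i' → i' < n →
      (i' = i + 1 ∧ i % 2 = j % 2 ∨ i = i' + 1 ∧ i' % 2 = j % 2) → x i' < x j ∧ y j < y i' := by
    intro i i' h1 h2 h3 h4 h5 h6 h7
    have b := hbad i' (by omega) h6
    have n1 := hx.inj i' j h6 (by omega) (by omega)
    have n2 := hy.inj i' j h6 (by omega) (by omega)
    have n3 := hx.inj i (j+1) (by omega) (by omega) (by omega)
    have n4 := hy.inj i (j+1) (by omega) (by omega) (by omega)
    have a1 := hag i (j+1) (by omega) (by omega) (by omega) (by omega)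
    have a2 := hag i' (j+1) (by omega) (by omega) (by omega) (by omega)
    have a3 := hag (j+1) i (by omega) (by omega) (by omega) (by omega)
    have a4 := hag (j+1) i' (by omega) (by omega) (by omega) (by omega)
    have c1 : Bt (x i) (x j) (x (j+1)) ↔ Bt (x i') (x j) (x (j+1)) := by
      rcases h7 with ⟨rfl, h7⟩ | ⟨rfl, h7⟩
      · exact hx.nc j i (by omega) (by omega) h7.symm
      · exact (hx.nc j i' (by omega) (by omega) h7.symm).symm
    have c2 : Bt (y i) (y j) (y (j+1)) ↔ Bt (y i') (y j) (y (j+1)) := by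
      rcases h7 with ⟨rfl, h7⟩ | ⟨rfl, h7⟩
      · exact hy.nc j i (by omega) (by omega) h7.symm
      · exact (hy.nc j i' (by omega) (by omega) h7.symm).symm
    rcases eq_or_ne i' (j+1) with e | e
    · subst e
      simp only [Bt] at c1 c2
      omega
    have n5 := hx.inj i' (j+1) (by omega) (by omega) e
    have n6 := hy.inj i' (j+1) (by omega) (by omega) e
    simp only [Bt] at c1 c2
    omega
  obtain ⟨p, hp⟩ : ∃ p, i0 = p + 1 := ⟨i0 - 1, by omega⟩
  have hpX : ¬ (x p < x j ∧ y j < y p) := by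
    rcases Nat.lt_or_ge c p with h | h
    · intro h'
      exact hmin p (by omega) ⟨h, by omega, h'.1, h'.2⟩
    · have : p = c := by omega
      subst this
      have := hold p j (by omega) (by omega) (by omega) (by omega)
      omega
  have hbp := hbad p (by omega) (by omega)
  clear_value i0
  subst hp
  have hpar : p % 2 ≠ j % 2 := by
    intro h
    exact hpX (hcl (p+1) p hc0 hn0 hx0 hy0 (by omega) (by omega) (Or.inr ⟨rfl, h⟩))
  have hne : p + 1 ≠ n - 1 := by
    intro h
    rw [h] at hx0 hy0
    omega
  obtain ⟨hx2, hy2⟩ := hcl (p+1) (p+2) hc0 hn0 hx0 hy0 (by omega) (by omega)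
    (Or.inl ⟨rfl, by omega⟩)
  have n1 := hx.inj p j (by omega) (by omega) (by omega)
  have n2 := hy.inj p j (by omega) (by omega) (by omega)
  have n3 := hx.inj p (p+1) (by omega) (by omega) (by omega)
  have n4 := hy.inj p (p+1) (by omega) (by omega) (by omega)
  have n5 := hx.inj (p+2) (p+1) (by omega) (by omega) (by omega)
  have n6 := hy.inj (p+2) (p+1) (by omega) (by omega) (by omega)
  have a1 := hx.alt p (by omega) (by omega)
  have a2 := hy.alt p (by omega) (by omega)
  have bx : Bt (x (p+2)) (x p) (x (p+1)) := by
    have g1 := hag p (p+2) (by omega) (by omega) (by omega) (by omega)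
    have g2 := hag (p+2) p (by omega) (by omega) (by omega) (by omega)
    have g3 := hag p (p+1) (by omega) (by omega) (by omega) (by omega)
    have n7 := hx.inj p (p+2) (by omega) (by omega) (by omega)
    simp only [Bt]
    omega
  have hby : Bt (y (p+2)) (y p) (y (p+1)) := by
    have g1 := hag p (p+2) (by omega) (by omega) (by omega) (by omega)
    have g2 := hag (p+2) p (by omega) (by omega) (by omega) (by omega)
    have g3 := hag p (p+1) (by omega) (by omega) (by omega) (by omega)
    have n7 := hy.inj p (p+2) (by omega) (by omega) (by omega)
    simp only [Bt]
    omega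
  have l1 := inward_last hx (by omega) bx (n-1) (by omega) (by omega) (by omega)
  have l2 := inward_last hy (by omega) hby (n-1) (by omega) (by omega) (by omega)
  omega

theorem stepAg {c n : ℕ} {x y : ℕ → ℤ} (hx : Sp c n x) (hy : Sp c n y) {j : ℕ} (hj : j < c)
    (hcn : c < n)
    (hag : Ag x y (j + 1) n) (hold : Ag x y 0 (c + 1))
    (hlast : x (n - 1) < x j ↔ y (n - 1) < y j) : Ag x y j n := by
  have h1 := stepCore hx hy hj hag hold hlast
  have h2 := stepCore hy hx hj hag.symm hold.symm hlast.symm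
  have key : ∀ i, j < i → i < n → ((x i < x j ↔ y i < y j) ∧ (x j < x i ↔ y j < y i)) := by
    intro i hi hin
    rcases Nat.lt_or_ge c i with h | h
    · have e1 := h1 i
      have e2 := h2 i
      have n1 := hx.inj i j (by omega) (by omega) (by omega)
      have n2 := hy.inj i j (by omega) (by omega) (by omega)
      omega
    · exact ⟨hold i j (by omega) (by omega) (by omega) (by omega),
        hold j i (by omega) (by omega) (by omega) (by omega)⟩
  intro a b ha han hb hbn
  rcases Nat.eq_or_lt_of_le ha with rfl | ha
  · rcases Nat.eq_or_lt_of_le hb with rfl | hb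
    · simp
    · exact (key b hb hbn).2
  · rcases Nat.eq_or_lt_of_le hb with rfl | hb
    · exact (key a ha han).1
    · exact hag a b ha han hb hbn

theorem uniq {c n : ℕ} {x y : ℕ → ℤ} (hx : Sp c n x) (hy : Sp c n y) (hcn : c < n)
    (hold : Ag x y 0 (c + 1)) (hbase : Ag x y c n) (s : ℕ) (hs : s ≤ c)
    (hgap : ∀ j, s ≤ j → j < c → (x (n - 1) < x j ↔ y (n - 1) < y j)) : Ag x y s n := by
  obtain ⟨d, hd⟩ := Nat.exists_eq_add_of_le hs
  induction d generalizing s with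
  | zero =>
    have : s = c := by omega
    rw [this]; exact hbase
  | succ d ih =>
    exact stepAg hx hy (by omega) hcn (ih (s+1) (by omega)
      (fun j h1 h2 => hgap j (by omega) h2) (by omega)) hold (hgap s le_rfl (by omega))

/-! ### Turning index -/

/-- `x m` is extremal among `x c, …, x m`. -/
def Xtr (c : ℕ) (x : ℕ → ℤ) (m : ℕ) : Prop :=
  (∀ i, c ≤ i → i < m → x i < x m) ∨ (∀ i, c ≤ i → i < m → x m < x i)

theorem ext_neg {c : ℕ} {x : ℕ → ℤ} {m : ℕ} : Xtr c (fun i => - x i) m ↔ Xtr c x m := by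
  simp only [Xtr, neg_lt_neg_iff]
  exact or_comm

theorem dir_agree {c n : ℕ} {x y : ℕ → ℤ} (hx : Sp c n x) (hy : Sp c n y)
    (h0 : x c < x (c+1) ↔ y c < y (c+1)) (d : ℕ) (hd : c + d + 1 < n) :
    x (c+d) < x (c+d+1) ↔ y (c+d) < y (c+d+1) := by
  induction d with
  | zero => exact h0
  | succ d ih =>
    have := ih (by omega)
    have a1 := hx.alt (c+d) (by omega) (by omega)
    have a2 := hy.alt (c+d) (by omega) (by omega)
    have n1 := hx.inj (c+d+1) (c+d+2) (by omega) (by omega) (by omega)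
    have n2 := hy.inj (c+d+1) (c+d+2) (by omega) (by omega) (by omega)
    have e : c + (d+1) = c + d + 1 := by omega
    rw [e]
    have e' : c + d + 1 + 1 = c + d + 2 := by omega
    rw [e']
    omega

theorem base_out {c n : ℕ} {x y : ℕ → ℤ} (hx : Sp c n x) (hy : Sp c n y)
    (h0 : x c < x (c+1) ↔ y c < y (c+1)) (k : ℕ) (hk : k ≤ n)
    (ex : ∀ m, c < m → m < k → Xtr c x m) (ey : ∀ m, c < m → m < k → Xtr c y m) :
    Ag x y c k := by
  induction k with
  | zero => intro a b h1 h2; omega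
  | succ k ih =>
    have ih := ih (by omega) (fun m h1 h2 => ex m h1 (by omega)) (fun m h1 h2 => ey m h1 (by omega))
    rcases Nat.lt_or_ge c k with hck | hck
    · obtain ⟨d, rfl⟩ : ∃ d, k = c + d + 1 := ⟨k - c - 1, by omega⟩
      have hd := dir_agree hx hy h0 d (by omega)
      have key : ∀ i, c ≤ i → i < c + d + 1 → ((x i < x (c+d+1) ↔ y i < y (c+d+1)) ∧
          (x (c+d+1) < x i ↔ y (c+d+1) < y i)) := by
        intro i h1 h2
        rcases ex _ hck (by omega) with e1 | e1 <;> rcases ey _ hck (by omega) with e2 | e2 <;>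
        · have := e1 i h1 h2
          have := e2 i h1 h2
          have := e1 (c+d) (by omega) (by omega)
          have := e2 (c+d) (by omega) (by omega)
          omega
      intro a b ha han hb hbn
      rcases Nat.lt_or_ge a (c+d+1) with h1 | h1 <;> rcases Nat.lt_or_ge b (c+d+1) with h2 | h2
      · exact ih a b ha h1 hb h2
      · have : b = c+d+1 := by omega
        subst this; exact (key a ha h1).1
      · have : a = c+d+1 := by omega
        subst this; exact (key b hb h2).2
      · have : a = c+d+1 := by omega
        subst this
        have : b = c+d+1 := by omega
        subst this; simp
    · intro a b ha han hb hbn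
      have : a = b := by omega
      subst this; simp

/-- In the outward phase, consecutive faces lie on alternate extremes. -/
theorem out_alt {c n : ℕ} {x : ℕ → ℤ} (hx : Sp c n x) {m : ℕ} (hm : c < m) (hmn : m + 1 < n)
    (e1 : ∀ i, c ≤ i → i < m → x i < x m) (e2 : Xtr c x (m+1)) :
    ∀ i, c ≤ i → i < m + 1 → x (m+1) < x i := by
  obtain ⟨p, rfl⟩ : ∃ p, m = p + 1 := ⟨m - 1, by omega⟩
  have a := hx.alt p (by omega) (by omega)
  have b := e1 p (by omega) (by omega)
  rcases e2 with h | h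
  · have := h (p+1) (by omega) (by omega)
    have e : p + 1 + 1 = p + 2 := by omega
    rw [e] at this
    omega
  · exact h

/-- At the turning index, the new face is adjacent to the previous one. -/
theorem turn_right {c n : ℕ} {x : ℕ → ℤ} (hx : Sp c n x) {p : ℕ} (hp : c ≤ p) (hpn : p + 2 < n)
    (ex : ∀ m, c < m → m < p + 2 → Xtr c x m) (hk : ¬ Xtr c x (p+2)) (hd : x (p+1) < x (p+2)) :
    Bt (x (p+2)) (x p) (x (p+1)) ∧ ∀ i, c ≤ i → i < p + 1 → x (p+2) < x i := by
  have a := hx.alt p (by omega) (by omega)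
  have n1 := hx.inj p (p+1) (by omega) (by omega) (by omega)
  have n2 := hx.inj p (p+2) (by omega) (by omega) (by omega)
  -- p+1 is a left extreme
  have l1 : ∀ i, c ≤ i → i < p + 1 → x (p+1) < x i := by
    rcases ex (p+1) (by omega) (by omega) with h | h
    · have := h p (by omega) (by omega)
      omega
    · exact h
  have r0 : ∀ i, c ≤ i → i < p → x i < x p := by
    rcases Nat.lt_or_ge c p with h | h
    · rcases ex p h (by omega) with e | e
      · exact e
      · have := out_alt hx.neg (m := p) h (by omega)
          (fun i h1 h2 => by have := e i h1 h2; (try simp only); omega)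
          (ext_neg.2 (ex (p+1) (by omega) (by omega))) p (by omega) (by omega)
        try simp only at this
        omega
    · intro i h1 h2; omega
  have hlt : x (p+2) < x p := by
    by_contra hcon
    apply hk
    left
    intro i h1 h2
    rcases Nat.lt_or_ge i p with h | h
    · have := r0 i h1 h; omega
    · rcases Nat.eq_or_lt_of_le h with h | h
      · subst h; omega
      · have : i = p + 1 := by omega
        subst this; omega
  refine ⟨by simp only [Bt]; omega, ?_⟩
  rcases Nat.lt_or_ge c p with h | h
  · obtain ⟨q, rfl⟩ : ∃ q, p = q + 1 := ⟨p - 1, by omega⟩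
    have nc := hx.nc q (q+2) (by omega) (by omega) (by omega)
    have hq1 := r0 q (by omega) (by omega)
    have hq2 := l1 q (by omega) (by omega)
    have n3 := hx.inj (q+3) q (by omega) (by omega) (by omega)
    have l2 : ∀ i, c ≤ i → i < q → x q < x i := by
      rcases Nat.lt_or_ge c q with h' | h'
      · rcases ex q h' (by omega) with e | e
        · have := out_alt hx h' (by omega) e (ex (q+1) (by omega) (by omega)) q (by omega) (by omega)
          omega
        · exact e
      · intro i h1 h2; omega
    simp only [Bt, Nat.add_assoc, Nat.reduceAdd] at *
    have hf : x (q+3) < x q := by omega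
    intro i h1 h2
    rcases Nat.lt_or_ge i q with h | h
    · have := l2 i h1 h; omega
    · rcases Nat.eq_or_lt_of_le h with h | h
      · subst h; omega
      · have : i = q + 1 := by omega
        subst this; omega
  · intro i h1 h2
    have : i = p := by omega
    subst this; omega

theorem turn_adj {c n : ℕ} {x : ℕ → ℤ} (hx : Sp c n x) {p : ℕ} (hp : c ≤ p) (hpn : p + 2 < n)
    (ex : ∀ m, c < m → m < p + 2 → Xtr c x m) (hk : ¬ Xtr c x (p+2)) :
    Bt (x (p+2)) (x p) (x (p+1)) ∧
    ((∀ i, c ≤ i → i < p + 1 → x (p+2) < x i ∧ x (p+1) < x i) ∨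
     (∀ i, c ≤ i → i < p + 1 → x i < x (p+2) ∧ x i < x (p+1))) := by
  rcases lt_or_gt_of_ne (hx.inj (p+1) (p+2) (by omega) (by omega) (by omega)) with h | h
  · obtain ⟨h1, h2⟩ := turn_right hx hp hpn ex hk h
    refine ⟨h1, Or.inl fun i hi hi' => ?_⟩
    have := h2 i hi hi'
    omega
  · obtain ⟨h1, h2⟩ := turn_right hx.neg hp hpn (fun m h1 h2 => ext_neg.2 (ex m h1 h2))
      (fun h => hk (ext_neg.1 h)) (by (try simp only); omega)
    refine ⟨by simp only [Bt] at *; omega, Or.inr fun i hi hi' => ?_⟩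
    have := h2 i hi hi'
    try simp only at this
    omega

theorem adj_all {c n : ℕ} {x : ℕ → ℤ} (hx : Sp c n x) {p : ℕ} (hp : c ≤ p)
    (ex : ∀ m, c < m → m < p + 2 → Xtr c x m) (hk : ¬ Xtr c x (p+2)) (d : ℕ) (hd : p + d + 2 < n) :
    Bt (x (p+d+2)) (x (p+d)) (x (p+d+1)) ∧
    ∀ i, c ≤ i → i < p + d + 1 → ¬ Bt (x i) (x (p+d+1)) (x (p+d+2)) := by
  induction d with
  | zero =>
    obtain ⟨h1, h2⟩ := turn_adj hx hp (by omega) ex hk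
    refine ⟨h1, fun i h3 h4 h5 => ?_⟩
    simp only [Bt, Nat.add_zero] at *
    rcases h2 with h2 | h2 <;> have := h2 i h3 h4 <;> omega
  | succ d ih =>
    obtain ⟨h1, h2⟩ := ih (by omega)
    have h3 := inward0 hx (i := p + d) (by omega) (by omega) h1
    have e1 : p + (d+1) + 2 = p + d + 3 := by omega
    have e2 : p + (d+1) + 1 = p + d + 2 := by omega
    have e3 : p + (d+1) = p + d + 1 := by omega
    rw [e1, e2, e3]
    refine ⟨h3, fun i h4 h5 => ?_⟩
    rcases Nat.lt_or_ge i (p+d+1) with h | h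
    · have := h2 i h4 h
      simp only [Bt] at *
      omega
    · have : i = p+d+1 := by omega
      subst this
      simp only [Bt] at *
      omega

theorem base_full {c n : ℕ} {x y : ℕ → ℤ} (hx : Sp c n x) (hy : Sp c n y)
    (h0 : x c < x (c+1) ↔ y c < y (c+1)) (k : ℕ) (hck : c + 2 ≤ k) (hk : k ≤ n)
    (ex : ∀ m, c < m → m < k → Xtr c x m) (ey : ∀ m, c < m → m < k → Xtr c y m)
    (kx : k < n → ¬ Xtr c x k) (ky : k < n → ¬ Xtr c y k) :
    Ag x y c n := by
  obtain ⟨p, rfl⟩ : ∃ p, k = p + 2 := ⟨k - 2, by omega⟩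
  have main : ∀ d, p + 2 + d ≤ n → Ag x y c (p + 2 + d) := by
    intro d
    induction d with
    | zero => intro _; exact base_out hx hy h0 _ hk ex ey
    | succ d ih =>
      intro hd
      have ih := ih (by omega)
      obtain ⟨bx, ax⟩ := adj_all hx (by omega) ex (kx (by omega)) d (by omega)
      obtain ⟨hby, ay⟩ := adj_all hy (by omega) ey (ky (by omega)) d (by omega)
      obtain ⟨f, hf⟩ : ∃ f, p + d = c + f := ⟨p + d - c, by omega⟩
      have dd := dir_agree hx hy h0 (f+1) (by omega)
      have e0 : c + (f+1) = p + d + 1 := by omega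
      have e1 : p + d + 1 + 1 = p + d + 2 := by omega
      rw [e0, e1] at dd
      have key : ∀ i, c ≤ i → i < p + d + 2 → ((x i < x (p+d+2) ↔ y i < y (p+d+2)) ∧
          (x (p+d+2) < x i ↔ y (p+d+2) < y i)) := by
        intro i h1 h2
        have n1 := hx.inj i (p+d+2) (by omega) (by omega) (by omega)
        have n2 := hy.inj i (p+d+2) (by omega) (by omega) (by omega)
        rcases Nat.lt_or_ge i (p+d+1) with h | h
        · have n3 := hx.inj i (p+d+1) (by omega) (by omega) (by omega)
          have n4 := hy.inj i (p+d+1) (by omega) (by omega) (by omega)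
          have := ax i h1 h
          have := ay i h1 h
          have := ih i (p+d+1) (by omega) (by omega) (by omega) (by omega)
          simp only [Bt] at *
          omega
        · have : i = p+d+1 := by omega
          subst this
          omega
      intro a b ha han hb hbn
      rcases Nat.lt_or_ge a (p+d+2) with h1 | h1 <;> rcases Nat.lt_or_ge b (p+d+2) with h2 | h2
      · exact ih a b ha (by omega) hb (by omega)
      · have : b = p+d+2 := by omega
        subst this; exact (key a ha h1).1
      · have : a = p+d+2 := by omega
        subst this; exact (key b hb h2).2
      · have : a = p+d+2 := by omega
        subst this
        have : b = p+d+2 := by omega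
        subst this; simp
  have := main (n - (p+2)) (by omega)
  rwa [show p + 2 + (n - (p+2)) = n by omega] at this

theorem last_side {c n : ℕ} {x : ℕ → ℤ} (hx : Sp c n x) {p : ℕ} (hp : c ≤ p) (hpn : p + 2 ≤ n)
    (ex : ∀ m, c < m → m < p + 2 → Xtr c x m) (hk : p + 2 < n → ¬ Xtr c x (p+2)) :
    (∀ i, c ≤ i → i < p + 1 → x i < x (n-1) ∧ x (n-1) ≤ x (p+1)) ∨
    (∀ i, c ≤ i → i < p + 1 → x (p+1) ≤ x (n-1) ∧ x (n-1) < x i) := by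
  rcases Nat.eq_or_lt_of_le hpn with h | h
  · have e : n - 1 = p + 1 := by omega
    rw [e]
    rcases ex (p+1) (by omega) (by omega) with h | h
    · left; intro i h1 h2; exact ⟨h i h1 h2, le_rfl⟩
    · right; intro i h1 h2; exact ⟨le_rfl, h i h1 h2⟩
  · obtain ⟨h1, h2⟩ := turn_adj hx hp h ex (hk h)
    have h3 := inward_last hx hp h1 (n-1) (by omega) (by omega) h
    have hpp : p < p + 1 := by omega
    rcases h2 with h2 | h2
    · right
      intro i hi hi'
      have := h2 i hi hi'
      have := h2 p hp hpp
      simp only [Bt] at h1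
      omega
    · left
      intro i hi hi'
      have := h2 i hi hi'
      have := h2 p hp hpp
      simp only [Bt] at h1
      omega

theorem out_side {c n : ℕ} {x : ℕ → ℤ} (hx : Sp c n x) (d : ℕ) (hd : c + 1 + d < n)
    (ex : ∀ m, c < m → m ≤ c + 1 + d → Xtr c x m) :
    x c < x (c+1+d) ↔ (x c < x (c+1) ↔ d % 2 = 0) := by
  induction d with
  | zero => simp
  | succ d ih =>
    have ih := ih (by omega) (fun m h1 h2 => ex m h1 (by omega))
    have n1 := hx.inj c (c+1+d) (by omega) (by omega) (by omega)
    have n2 := hx.inj c (c+1) (by omega) (by omega) (by omega)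
    have key : x c < x (c+1+(d+1)) ↔ ¬ x c < x (c+1+d) := by
      rcases ex (c+1+d) (by omega) (by omega) with h | h
      · have h1 := out_alt hx (m := c+1+d) (by omega) (by omega) h (ex _ (by omega) (by omega))
          c (by omega) (by omega)
        have h2 := h c le_rfl (by omega)
        have e : c+1+(d+1) = c+1+d+1 := by omega
        rw [e]
        omega
      · have h1 := out_alt hx.neg (m := c+1+d) (by omega) (by omega)
          (fun i h1 h2 => by have := h i h1 h2; (try simp only); omega)
          (ext_neg.2 (ex _ (by omega) (by omega))) c (by omega) (by omega)
        have h2 := h c le_rfl (by omega)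
        have e : c+1+(d+1) = c+1+d+1 := by omega
        rw [e]
        try simp only at h1
        omega
    omega

theorem trap {c n : ℕ} {x : ℕ → ℤ} (hx : Sp c n x) {t j : ℕ} (ht : c < t) (htn : t + 2 < n)
    (h1 : x (t+1) < x c) (h2 : x t < x (t+2))
    (hj : ∀ i, j < i → i ≤ c → x i < x t) :
    ∀ d i, i + d = c → j < i → x (t+1) < x i := by
  intro d
  induction d with
  | zero =>
    intro i hi _
    have : i = c := by omega
    subst this; exact h1
  | succ d ih =>
    intro i hi hji
    have a := ih (i+1) (by omega) (by omega)
    have b := hj (i+1) (by omega) (by omega)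
    have b' := hj i (by omega) (by omega)
    rcases Nat.mod_two_eq_zero_or_one (i + t) with e | e
    · have := hx.nc t i (by omega) (by omega) (by omega)
      simp only [Bt] at this
      omega
    · have := hx.nc (t+1) i (by omega) (by omega) (by omega)
      simp only [Bt, Nat.add_assoc, Nat.reduceAdd] at this
      omega

theorem pair {c n : ℕ} {x y : ℕ → ℤ} (hx : Sp c n x) (hy : Sp c n y)
    (h0 : x c < x (c+1) ↔ y c < y (c+1)) (hold : Ag x y 0 (c+1))
    {p q : ℕ} (hp : c ≤ p) (hq : q + 2 ≤ n) (hpq : p + 4 ≤ q)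
    (ex : ∀ m, c < m → m < p + 2 → Xtr c x m) (kx : p + 2 < n → ¬ Xtr c x (p+2))
    (ey : ∀ m, c < m → m < q + 2 → Xtr c y m) (ky : q + 2 < n → ¬ Xtr c y (q+2))
    {j : ℕ} (hj : j < c)
    (jx : ∀ i, j < i → i ≤ c → x i < x (n-1))
    (jy : ∀ i, j < i → i ≤ c → y i < y (n-1)) (jy' : y (n-1) < y j) : False := by
  have sx := last_side hx hp (by omega) ex kx
  have sy := last_side hy (by omega) hq ey ky
  have sx' : ∀ i, c ≤ i → i < p + 1 → x i < x (n-1) ∧ x (n-1) ≤ x (p+1) := by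
    rcases sx with h | h
    · exact h
    · have := h c le_rfl (by omega)
      have := jx c hj le_rfl
      omega
  have sy' : ∀ i, c ≤ i → i < q + 1 → y i < y (n-1) ∧ y (n-1) ≤ y (q+1) := by
    rcases sy with h | h
    · exact h
    · have := h c le_rfl (by omega)
      have := jy c hj le_rfl
      omega
  have hb : Ag x y c (p+2) := base_out hx hy h0 (p+2) (by omega) ex
    (fun m h1 h2 => ey m h1 (by omega))
  have xt : ∀ i, j < i → i ≤ c → x i < x (p+1) := by
    intro i h1 h2
    have := jx i h1 h2
    have := sx' c le_rfl (by omega)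
    omega
  have xr : ∀ i, c ≤ i → i < p + 1 → x i < x (p+1) := by
    intro i h1 h2
    have := sx' i h1 h2
    omega
  have yr : ∀ i, c ≤ i → i < p + 1 → y i < y (p+1) := by
    intro i h1 h2
    exact (hb i (p+1) h1 (by omega) (by omega) (by omega)).1 (xr i h1 h2)
  have yl : ∀ i, c ≤ i → i < p + 2 → y (p+2) < y i :=
    out_alt hy (by omega) (by omega) yr (ey _ (by omega) (by omega))
  have y3 : y (p+1) < y (p+3) := by
    have := out_alt hy.neg (m := p+2) (by omega) (by omega)
      (fun i h1 h2 => by have := yl i h1 h2; (try simp only); omega)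
      (ext_neg.2 (ey _ (by omega) (by omega))) (p+1) (by omega) (by omega)
    try simp only at this
    have e : p + 2 + 1 = p + 3 := by omega
    rw [e] at this
    omega
  have y3' := sy' (p+3) (by omega) (by omega)
  have yc : y (p+2) < y c := yl c le_rfl (by omega)
  have trap' : ∀ j', j ≤ j' → j' < c → y (p+1) < y j' → (∀ i, j' < i → i ≤ c → y i < y (p+1)) →
      y (p+2) < y (j'+1) := by
    intro j' h1 h2 h3 h4
    exact trap hy (t := p+1) (j := j') (by omega) (by omega) yc y3 h4 (c - (j'+1)) (j'+1)
      (by omega) (by omega)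
  by_cases hall : ∀ i, j < i → i ≤ c → y i < y (p+1)
  · have h1 := trap' j le_rfl hj (by omega) hall
    have h2 := hall (j+1) (by omega) (by omega)
    rcases Nat.mod_two_eq_zero_or_one (j + (p+1)) with e | e
    · have := hy.nc (p+1) j (by omega) (by omega) (by omega)
      simp only [Bt, Nat.add_assoc, Nat.reduceAdd] at this
      omega
    · have := hy.nc (p+2) j (by omega) (by omega) (by omega)
      simp only [Bt, Nat.add_assoc, Nat.reduceAdd] at this
      omega
  · push Not at hall
    obtain ⟨i1, hi1, hi1c, hi1y⟩ := hall
    -- the largest such index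
    obtain ⟨j', hj1, hj2, hj3, hj4⟩ : ∃ j', j < j' ∧ j' ≤ c ∧ y (p+1) ≤ y j' ∧
        ∀ i, j' < i → i ≤ c → y i < y (p+1) := by
      classical
      have hP : (j < i1 ∧ y (p+1) ≤ y i1) := ⟨hi1, hi1y⟩
      have hs := Nat.findGreatest_spec (P := fun i => j < i ∧ y (p+1) ≤ y i) hi1c hP
      refine ⟨Nat.findGreatest (fun i => j < i ∧ y (p+1) ≤ y i) c, hs.1, Nat.findGreatest_le _,
        hs.2, ?_⟩
      intro i h1 h2
      have := Nat.findGreatest_is_greatest h1 h2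
      by_contra hcon
      exact this ⟨by omega, by omega⟩
    have hj'c : j' < c := by
      rcases Nat.eq_or_lt_of_le hj2 with h | h
      · subst h
        have := yr j' le_rfl (by omega)
        omega
      · exact h
    have hne := hy.inj (p+1) j' (by omega) (by omega) (by omega)
    have h1 := trap' j' (by omega) hj'c (by omega) hj4
    have h2 := hj4 (j'+1) (by omega) (by omega)
    have hag : Ag x y (j'+1) (p+2) := by
      refine uniq (hx.mono (n' := p+2) (by omega)) (hy.mono (n' := p+2) (by omega)) (by omega) hold
        hb (j'+1) (by omega) ?_
      intro i h3 h4
      have := xt i (by omega) (by omega)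
      have := hj4 i (by omega) (by omega)
      have e : p + 2 - 1 = p + 1 := by omega
      rw [e]
      omega
    rcases Nat.mod_two_eq_zero_or_one (j' + (p+1)) with e | e
    · have := hy.nc (p+1) j' (by omega) (by omega) (by omega)
      simp only [Bt, Nat.add_assoc, Nat.reduceAdd] at this
      omega
    · have nc1 := hy.nc p j' (by omega) (by omega) (by omega)
      have nc2 := hx.nc p j' (by omega) (by omega) (by omega)
      have g1 := hag (j'+1) p (by omega) (by omega) (by omega) (by omega)
      have hne' := hy.inj (j'+1) p (by omega) (by omega) (by omega)
      have g2 := hold c j' (by omega) (by omega) (by omega) (by omega)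
      have g3 := yr c le_rfl (by omega)
      have g4 := xt j' hj1 hj2
      have g5 := yr p hp (by omega)
      have g6 : x p ≤ x c := by
        rcases Nat.eq_or_lt_of_le hp with h | h
        · rw [h]
        · rcases ex p h (by omega) with h' | h'
          · have := out_alt hx h (by omega) h' (ex _ (by omega) (by omega)) p hp (by omega)
            have := xr p hp (by omega)
            omega
          · exact (h' c le_rfl h).le
      simp only [Bt] at nc1 nc2
      omega

/-- Index at which the spiral first fails to be extremal. -/
noncomputable def turn (c n : ℕ) (x : ℕ → ℤ) : ℕ :=
  sInf {k | c < k ∧ (n ≤ k ∨ ¬ Xtr c x k)}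

theorem turn_spec {c n : ℕ} {x : ℕ → ℤ} (hn : c + 2 ≤ n) (hx : Sp c n x) :
    c + 2 ≤ turn c n x ∧ turn c n x ≤ n ∧ (∀ m, c < m → m < turn c n x → Xtr c x m) ∧
    (turn c n x < n → ¬ Xtr c x (turn c n x)) := by
  have hne : ({k | c < k ∧ (n ≤ k ∨ ¬ Xtr c x k)} : Set ℕ).Nonempty := ⟨n, by
    simp only [Set.mem_ofPred_eq]; omega⟩
  have h1 := Nat.sInf_mem hne
  have h2 : ∀ m, m < turn c n x → ¬ (c < m ∧ (n ≤ m ∨ ¬ Xtr c x m)) :=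
    fun m hm => Nat.notMem_of_lt_sInf hm
  have h3 : turn c n x ≤ n := Nat.sInf_le (by simp only [Set.mem_ofPred_eq]; omega)
  change c < turn c n x ∧ (n ≤ turn c n x ∨ ¬ Xtr c x (turn c n x)) at h1
  refine ⟨?_, h3, ?_, ?_⟩
  · by_contra hcon
    have e : turn c n x = c + 1 := by omega
    rcases h1.2 with h | h
    · omega
    · apply h
      rw [e]
      have n1 := hx.inj c (c+1) (by omega) (by omega) (by omega)
      rcases lt_or_gt_of_ne n1 with h' | h'
      · left; intro i h4 h5
        have : i = c := by omega
        subst this; exact h'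
      · right; intro i h4 h5
        have : i = c := by omega
        subst this; exact h'
  · intro m hm hm'
    have := h2 m hm'
    by_contra hcon
    exact this ⟨hm, Or.inr hcon⟩
  · intro h
    rcases h1.2 with h' | h'
    · omega
    · exact h'

theorem turn_neg {c n : ℕ} {x : ℕ → ℤ} : turn c n (fun i => - x i) = turn c n x := by
  unfold turn
  congr 1
  ext k
  simp only [Set.mem_ofPred_eq, ext_neg]

/-- Parity of the turning index. -/
theorem turn_parity {c n : ℕ} {x : ℕ → ℤ} (hn : c + 2 ≤ n) (hx : Sp c n x) :
    x c < x (n-1) ↔ (x c < x (c+1) ↔ (turn c n x - c) % 2 = 0) := by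
  obtain ⟨h1, h2, h3, h4⟩ := turn_spec hn hx
  obtain ⟨p, hp⟩ : ∃ p, turn c n x = c + p + 2 := ⟨turn c n x - c - 2, by omega⟩
  rw [hp] at h1 h2 h3 h4 ⊢
  have hs := last_side hx (p := c + p) (by omega) h2 h3 h4
  have ho := out_side hx p (by omega) (fun m h5 h6 => h3 m h5 (by omega))
  have e : c + 1 + p = c + p + 1 := by omega
  rw [e] at ho
  have e2 : x c < x (n-1) ↔ x c < x (c+p+1) := by
    rcases hs with h | h <;> have := h c le_rfl (by omega) <;> omega
  rw [e2, ho]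
  omega

/-- Two extensions ending in the same interior gap have nearby turning indices. -/
theorem turn_close_right {c n : ℕ} {x y : ℕ → ℤ} (hn : c + 2 ≤ n) (hx : Sp c n x) (hy : Sp c n y)
    (h0 : x c < x (c+1) ↔ y c < y (c+1)) (hold : Ag x y 0 (c+1))
    (hgap : ∀ i, i ≤ c → (x i < x (n-1) ↔ y i < y (n-1)))
    (hr : x c < x (n-1)) (hintr : ∃ i ≤ c, x (n-1) < x i) : turn c n y < turn c n x + 4 := by
  by_contra hcon
  obtain ⟨h1, h2, h3, h4⟩ := turn_spec hn hx
  obtain ⟨h1', h2', h3', h4'⟩ := turn_spec hn hy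
  obtain ⟨p, hp⟩ : ∃ p, turn c n x = p + 2 := ⟨turn c n x - 2, by omega⟩
  obtain ⟨q, hq⟩ : ∃ q, turn c n y = q + 2 := ⟨turn c n y - 2, by omega⟩
  rw [hp] at h1 h2 h3 h4 hcon
  rw [hq] at h1' h2' h3' h4' hcon
  obtain ⟨i0, hi0, hi0'⟩ := hintr
  classical
  have hs := Nat.findGreatest_spec (P := fun i => x (n-1) < x i) hi0 hi0'
  have hg := fun i h1 h2 => Nat.findGreatest_is_greatest (P := fun i => x (n-1) < x i) (n := c) (k := i) h1 h2
  have hl := Nat.findGreatest_le (P := fun i => x (n-1) < x i) c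
  set j := Nat.findGreatest (fun i => x (n-1) < x i) c
  have hjc : j < c := by
    rcases Nat.eq_or_lt_of_le hl with h | h
    · rw [h] at hs; omega
    · exact h
  have jx : ∀ i, j < i → i ≤ c → x i < x (n-1) := by
    intro i h1 h2
    have a := hg i h1 h2
    have b := hx.inj i (n-1) (by omega) (by omega) (by omega)
    omega
  refine pair hx hy h0 hold (p := p) (q := q) (by omega) h2' (by omega) h3 h4 h3' h4' hjc jx ?_ ?_
  · intro i h1 h2
    exact (hgap i h2).1 (jx i h1 h2)
  · have a := hgap j (by omega)
    have b := hy.inj j (n-1) (by omega) (by omega) (by omega)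
    omega

theorem turn_close {c n : ℕ} {x y : ℕ → ℤ} (hn : c + 2 ≤ n) (hx : Sp c n x) (hy : Sp c n y)
    (h0 : x c < x (c+1) ↔ y c < y (c+1)) (hold : Ag x y 0 (c+1))
    (hgap : ∀ i, i ≤ c → (x i < x (n-1) ↔ y i < y (n-1)))
    (hintr : ∃ i ≤ c, x (n-1) < x i) (hintr' : ∃ i ≤ c, x i < x (n-1)) :
    turn c n y < turn c n x + 4 := by
  rcases lt_or_gt_of_ne (hx.inj c (n-1) (by omega) (by omega) (by omega)) with h | h
  · exact turn_close_right hn hx hy h0 hold hgap h hintr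
  · rw [← turn_neg (x := x), ← turn_neg (x := y)]
    refine turn_close_right hn hx.neg hy.neg ?_ hold.neg ?_ ?_ ?_
    · have n1 := hx.inj c (c+1) (by omega) (by omega) (by omega)
      have n2 := hy.inj c (c+1) (by omega) (by omega) (by omega)
      omega
    · intro i hi
      have n1 := hx.inj i (n-1) (by omega) (by omega) (by omega)
      have n2 := hy.inj i (n-1) (by omega) (by omega) (by omega)
      have := hgap i hi
      omega
    · omega
    · obtain ⟨i, hi, hi'⟩ := hintr'
      exact ⟨i, hi, by omega⟩

/-- Equal turning index and equal gap imply equal order. -/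
theorem turn_uniq {c n : ℕ} {x y : ℕ → ℤ} (hn : c + 2 ≤ n) (hx : Sp c n x) (hy : Sp c n y)
    (h0 : x c < x (c+1) ↔ y c < y (c+1)) (hold : Ag x y 0 (c+1))
    (hgap : ∀ i, i ≤ c → (x i < x (n-1) ↔ y i < y (n-1)))
    (ht : turn c n x = turn c n y) : Ag x y 0 n := by
  obtain ⟨h1, h2, h3, h4⟩ := turn_spec hn hx
  obtain ⟨h1', h2', h3', h4'⟩ := turn_spec hn hy
  rw [← ht] at h1' h2' h3' h4'
  refine uniq hx hy (by omega) hold (base_full hx hy h0 _ h1 h2 h3 h3' h4 h4') 0 (by omega) ?_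
  intro i _ hi
  have n1 := hx.inj i (n-1) (by omega) (by omega) (by omega)
  have n2 := hy.inj i (n-1) (by omega) (by omega) (by omega)
  have := hgap i (by omega)
  omega

/-! ### Layer orderings as integer sequences -/

/-- Valid position sequence on `[0,n)` with crease directions `up`. -/
structure VX (up : ℕ → Prop) (n : ℕ) (x : ℕ → ℤ) : Prop where
  inj : ∀ i j, i < n → j < n → i ≠ j → x i ≠ x j
  dir : ∀ i, i + 1 < n → (x i < x (i+1) ↔ up i)
  nc : ∀ i j, i + 1 < n → j + 1 < n → i % 2 = j % 2 →
    (Bt (x j) (x i) (x (i + 1)) ↔ Bt (x (j + 1)) (x i) (x (i + 1)))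

theorem VX.mono {up : ℕ → Prop} {n n' : ℕ} {x : ℕ → ℤ} (h : VX up n x) (hn : n' ≤ n) :
    VX up n' x :=
  ⟨fun i j hi hj hij => h.inj i j (by omega) (by omega) hij,
   fun i hi => h.dir i (by omega),
   fun i j hi hj hij => h.nc i j (by omega) (by omega) hij⟩

theorem VX.congr {up : ℕ → Prop} {n : ℕ} {x y : ℕ → ℤ} (h : VX up n x) (hag : Ag x y 0 n) :
    VX up n y := by
  refine ⟨fun i j hi hj hij => ?_, fun i hi => ?_, fun i j hi hj hij => ?_⟩
  · have h1 := h.inj i j hi hj hij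
    have h2 := hag i j (by omega) hi (by omega) hj
    have h3 := hag j i (by omega) hj (by omega) hi
    omega
  · rw [← h.dir i hi]
    exact (hag i (i+1) (by omega) (by omega) (by omega) (by omega)).symm
  · have h0 := h.nc i j hi hj hij
    have a := fun u v (hu : u < n) (hv : v < n) => hag u v (by omega) hu (by omega) hv
    simp only [Bt] at h0 ⊢
    rw [← a i j (by omega) (by omega), ← a j (i+1) (by omega) (by omega),
      ← a (i+1) j (by omega) (by omega), ← a j i (by omega) (by omega),
      ← a i (j+1) (by omega) (by omega), ← a (j+1) (i+1) (by omega) (by omega),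
      ← a (i+1) (j+1) (by omega) (by omega), ← a (j+1) i (by omega) (by omega)]
    exact h0

theorem VX.sp {up : ℕ → Prop} {c n : ℕ} {x : ℕ → ℤ} (h : VX up n x)
    (hup : ∀ i, c ≤ i → i + 2 < n → (up (i+1) ↔ ¬ up i)) : Sp c n x := by
  refine ⟨h.inj, h.nc, fun i hi hin => ?_⟩
  have d1 := h.dir i (by omega)
  have d2 := h.dir (i+1) (by omega)
  have n1 := h.inj (i+1) (i+2) (by omega) (by omega) (by omega)
  have := hup i hi hin
  rw [d1]
  have e : i + 1 + 1 = i + 2 := by omega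
  rw [e] at d2
  constructor
  · intro hu
    have : ¬ x (i+1) < x (i+2) := fun hh => (this.1 (d2.1 hh)) hu
    omega
  · intro hu
    by_contra hh
    have := d2.2 (this.2 hh)
    omega

/-- The integer sequence of a layer ordering. -/
def xs {n : ℕ} (σ : Equiv.Perm (Fin n)) (i : ℕ) : ℤ := (faceVal σ i : ℤ)

theorem xs_lt {n : ℕ} (σ : Equiv.Perm (Fin n)) {i j : ℕ} (hi : i < n) (hj : j < n) :
    xs σ i < xs σ j ↔ σ ⟨i, hi⟩ < σ ⟨j, hj⟩ := by
  simp [xs, faceVal, hi, hj]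

theorem xs_inj {n : ℕ} (σ : Equiv.Perm (Fin n)) {i j : ℕ} (hi : i < n) (hj : j < n)
    (hij : i ≠ j) : xs σ i ≠ xs σ j := by
  intro h
  simp only [xs, faceVal, hi, hj, dif_pos, Nat.cast_inj] at h
  have := σ.injective (Fin.ext h)
  simp only [Fin.mk.injEq] at this
  exact hij this

theorem std {n : ℕ} (x : ℕ → ℤ) (hx : ∀ i j, i < n → j < n → i ≠ j → x i ≠ x j) :
    ∃ σ : Equiv.Perm (Fin n), Ag (xs σ) x 0 n := by
  classical
  let S : Fin n → Finset (Fin n) := fun i => Finset.univ.filter (fun j => x j < x i)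
  have hlt : ∀ i, (S i).card < n := by
    intro i
    have : S i ⊂ Finset.univ := by
      rw [Finset.ssubset_univ_iff]
      intro h
      have : i ∈ S i := by rw [h]; exact Finset.mem_univ _
      simp [S] at this
    simpa using Finset.card_lt_card this
  have hmono : ∀ i j : Fin n, x i < x j → (S i).card < (S j).card := by
    intro i j hij
    apply Finset.card_lt_card
    rw [Finset.ssubset_iff_of_subset]
    · exact ⟨i, by simpa [S] using hij, by simp [S]⟩
    · intro k hk
      simp only [S, Finset.mem_filter, Finset.mem_univ, true_and] at hk ⊢
      omega
  let f : Fin n → Fin n := fun i => ⟨(S i).card, hlt i⟩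
  have hf : Function.Injective f := by
    intro i j hij
    by_contra hne
    have h1 := hx i j i.2 j.2 (fun h => hne (Fin.ext h))
    have h2 : (S i).card = (S j).card := by simpa [f] using hij
    rcases lt_or_gt_of_ne h1 with h | h
    · have := hmono _ _ h; omega
    · have := hmono _ _ h; omega
  refine ⟨Equiv.ofBijective f (Finite.injective_iff_bijective.1 hf), ?_⟩
  intro a b _ ha _ hb
  rw [xs_lt _ ha hb]
  simp only [Equiv.ofBijective_apply, f, Fin.mk_lt_mk]
  constructor
  · intro h
    by_contra hcon
    rcases eq_or_ne a b with rfl | hne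
    · omega
    · have := hx a b ha hb hne
      have := hmono ⟨b, hb⟩ ⟨a, ha⟩ (by simp only; omega)
      omega
  · intro h
    exact hmono ⟨a, ha⟩ ⟨b, hb⟩ h

theorem perm_eq {n : ℕ} (σ τ : Equiv.Perm (Fin n)) (h : Ag (xs σ) (xs τ) 0 n) : σ = τ := by
  have hm : ∀ a b : Fin n, σ a < σ b ↔ τ a < τ b := by
    intro a b
    rw [← xs_lt σ a.2 b.2, ← xs_lt τ a.2 b.2]
    exact h a b (by omega) a.2 (by omega) b.2
  let e : Fin n ≃o Fin n :=
    { toEquiv := σ.symm.trans τ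
      map_rel_iff' := by
        intro a b
        simp only [Equiv.trans_apply]
        have := hm (σ.symm b) (σ.symm a)
        simp only [Equiv.apply_symm_apply] at this
        rw [← not_lt, ← this, not_lt] }
  have he : e = OrderIso.refl _ := Subsingleton.elim _ _
  ext a
  have : e (σ a) = σ a := by rw [he]; rfl
  have h2 : e (σ a) = τ a := by
    change (σ.symm.trans τ) (σ a) = τ a
    simp
  rw [← this, h2]

/-- Direction of a crease: `True` when layers increase. -/
def upOf (μ : ℕ → MV) (i : ℕ) : Prop := ¬ ((μ i = MV.M ∧ Even i) ∨ (μ i = MV.V ∧ Odd i))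

theorem valid_iff {n : ℕ} (μ : ℕ → MV) (σ : Equiv.Perm (Fin n)) :
    ValidLayerOrdering n μ σ ↔ VX (upOf μ) n (xs σ) := by
  have hb : ∀ p a b : ℕ, StrictlyBetween p a b ↔ Bt (p : ℤ) a b := by
    intro p a b
    simp only [StrictlyBetween, Bt]
    omega
  constructor
  · rintro ⟨h1, h2⟩
    refine ⟨fun i j hi hj hij => xs_inj σ hi hj hij, fun i hi => ?_, fun i j hi hj hij => ?_⟩
    · have := h1 i hi
      simp only [upOf]
      split_ifs at this with hc
      · simp only [xs, hc, not_true, iff_false]; omega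
      · simp only [xs, hc, not_false_iff, iff_true]; omega
    · have := h2 i j hi hj hij
      rw [hb, hb] at this
      simp only [xs]
      have aux : ∀ p q : Prop, ¬ ((p ∧ ¬ q) ∨ (q ∧ ¬ p)) → (p ↔ q) := by
        intro p q; tauto
      exact aux _ _ this
  · rintro ⟨-, h1, h2⟩
    refine ⟨fun i hi => ?_, fun i j hi hj hij => ?_⟩
    · have := h1 i hi
      have hne := xs_inj σ (i := i) (j := i+1) (by omega) hi (by omega)
      simp only [upOf] at this
      split_ifs with hc
      · simp only [xs, hc, not_true, iff_false, ne_eq] at this hne; omega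
      · simp only [xs, hc, not_false_iff, iff_true] at this; omega
    · have := h2 i j hi hj hij
      rw [hb, hb]
      simp only [xs] at this
      unfold Xor' Xor
      tauto

open Classical in
/-- The finite set of valid layer orderings. -/
noncomputable def FF (up : ℕ → Prop) (n : ℕ) : Finset (Equiv.Perm (Fin n)) :=
  Finset.univ.filter (fun σ => VX up n (xs σ))

theorem mem_FF {up : ℕ → Prop} {n : ℕ} {σ : Equiv.Perm (Fin n)} :
    σ ∈ FF up n ↔ VX up n (xs σ) := by simp [FF]

theorem foldCount_eq (n : ℕ) (μ : ℕ → MV) : foldCount n μ = (FF (upOf μ) n).card := by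
  classical
  unfold foldCount FF
  rw [Nat.card_eq_fintype_card, Fintype.card_subtype]
  congr 1
  ext σ
  simp only [Finset.mem_filter, Finset.mem_univ, true_and]
  exact valid_iff μ σ

/-! ### Upper bound -/

open Classical in
/-- Number of old faces below the last face. -/
noncomputable def gp (c n : ℕ) (x : ℕ → ℤ) : ℕ :=
  ((Finset.range (c+1)).filter (fun i => x i < x (n-1))).card

theorem gap_eq {c n : ℕ} {x y : ℕ → ℤ} (hold : Ag x y 0 (c+1))
    (hg : gp c n x = gp c n y) : ∀ i, i ≤ c → (x i < x (n-1) ↔ y i < y (n-1)) := by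
  classical
  set A := (Finset.range (c+1)).filter (fun i => x i < x (n-1)) with hA
  set B := (Finset.range (c+1)).filter (fun i => y i < y (n-1)) with hB
  have hc : A.card = B.card := by
    unfold gp at hg
    convert hg
  have hAB : A = B := by
    by_cases h : A ⊆ B
    · exact Finset.eq_of_subset_of_card_le h hc.ge
    · have h' : B ⊆ A := by
        obtain ⟨i, hi, hi'⟩ := Finset.not_subset.1 h
        intro k hk
        simp only [hA, hB, Finset.mem_filter, Finset.mem_range, not_and] at hi hi' hk ⊢
        have h1 := hi' hi.1
        refine ⟨hk.1, ?_⟩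
        have := hold k i (by omega) hk.1 (by omega) hi.1
        omega
      exact (Finset.eq_of_subset_of_card_le h' hc.le).symm
  intro i hi
  have := Finset.ext_iff.1 hAB i
  simp only [hA, hB, Finset.mem_filter, Finset.mem_range] at this
  have h1 : i < c + 1 := by omega
  simpa [h1] using this

theorem gp_le {c n : ℕ} {x : ℕ → ℤ} : gp c n x ≤ c + 1 := by
  classical
  unfold gp
  exact (Finset.card_filter_le _ _).trans (by simp)

theorem gp_zero {c n : ℕ} {x : ℕ → ℤ} (h : gp c n x = 0) : ∀ i ≤ c, ¬ x i < x (n-1) := by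
  classical
  unfold gp at h
  rw [Finset.card_eq_zero, Finset.filter_eq_empty_iff] at h
  intro i hi
  exact h (by simp; omega)

theorem gp_top {c n : ℕ} {x : ℕ → ℤ} (h : gp c n x = c + 1) : ∀ i ≤ c, x i < x (n-1) := by
  classical
  unfold gp at h
  have : ((Finset.range (c+1)).filter (fun i => x i < x (n-1))) = Finset.range (c+1) := by
    apply Finset.eq_of_subset_of_card_le (Finset.filter_subset _ _)
    rw [h]; simp
  rw [Finset.filter_eq_self] at this
  intro i hi
  exact this i (by simp; omega)

theorem gp_zero' {c n : ℕ} {x : ℕ → ℤ} (h : ∀ i ≤ c, ¬ x i < x (n-1)) : gp c n x = 0 := by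
  classical
  unfold gp
  rw [Finset.card_eq_zero, Finset.filter_eq_empty_iff]
  intro i hi
  exact h i (by simp at hi; omega)

theorem gp_top' {c n : ℕ} {x : ℕ → ℤ} (h : ∀ i ≤ c, x i < x (n-1)) : gp c n x = c + 1 := by
  classical
  unfold gp
  rw [Finset.filter_eq_self.2]
  · simp
  · intro i hi
    exact h i (by simp at hi; omega)

theorem fiber_le {up : ℕ → Prop} {c n a : ℕ} (ha : 1 ≤ a) (hn : n = c + 1 + a)
    (hup : ∀ i, c ≤ i → i + 2 < n → (up (i+1) ↔ ¬ up i))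
    (s : Finset (Equiv.Perm (Fin n))) (hs : ∀ σ ∈ s, VX up n (xs σ))
    (hag : ∀ σ ∈ s, ∀ τ ∈ s, Ag (xs σ) (xs τ) 0 (c+1)) : s.card ≤ a + 2 * c := by
  classical
  have hsp : ∀ σ ∈ s, Sp c n (xs σ) := fun σ h => (hs σ h).sp hup
  have hdir : ∀ σ ∈ s, ∀ τ ∈ s, (xs σ c < xs σ (c+1) ↔ xs τ c < xs τ (c+1)) := by
    intro σ h1 τ h2
    rw [(hs σ h1).dir c (by omega), (hs τ h2).dir c (by omega)]
  have hinj : ∀ σ ∈ s, ∀ τ ∈ s, gp c n (xs σ) = gp c n (xs τ) →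
      turn c n (xs σ) = turn c n (xs τ) → σ = τ := by
    intro σ h1 τ h2 h3 h4
    exact perm_eq σ τ (turn_uniq (by omega) (hsp σ h1) (hsp τ h2) (hdir σ h1 τ h2)
      (hag σ h1 τ h2) (gap_eq (hag σ h1 τ h2) h3) h4)
  let P : Equiv.Perm (Fin n) → Prop := fun σ => 1 ≤ gp c n (xs σ) ∧ gp c n (xs σ) ≤ c
  rw [← Finset.card_filter_add_card_filter_not (s := s) P, add_comm]
  apply Nat.add_le_add
  · -- outer gaps
    have h1 : (s.filter (fun σ => ¬ P σ)).card ≤ (Finset.Icc (c+2) n).card := by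
      apply Finset.card_le_card_of_injOn (fun σ => turn c n (xs σ))
      · intro σ hσ
        have hσ' := (Finset.mem_filter.1 hσ).1
        have := turn_spec (by omega) (hsp σ hσ')
        simp only [Finset.coe_Icc, Set.mem_Icc]
        exact ⟨this.1, this.2.1⟩
      · intro σ hσ τ hτ hst
        obtain ⟨h1, h1'⟩ := Finset.mem_filter.1 hσ
        obtain ⟨h2, h2'⟩ := Finset.mem_filter.1 hτ
        refine hinj σ h1 τ h2 ?_ hst
        have p1 := turn_parity (by omega) (hsp σ h1)
        have p2 := turn_parity (by omega) (hsp τ h2)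
        have hd := hdir σ h1 τ h2
        simp only at hst
        rw [hst] at p1
        have key : xs σ c < xs σ (n-1) ↔ xs τ c < xs τ (n-1) := by rw [p1, p2, hd]
        simp only [P] at h1' h2'
        have l1 := gp_le (c := c) (n := n) (x := xs σ)
        have l2 := gp_le (c := c) (n := n) (x := xs τ)
        have z1 : gp c n (xs σ) = 0 ∨ gp c n (xs σ) = c + 1 := by omega
        have z2 : gp c n (xs τ) = 0 ∨ gp c n (xs τ) = c + 1 := by omega
        rcases z1 with z1 | z1 <;> rcases z2 with z2 | z2
        · rw [z1, z2]
        · exact absurd (key.2 (gp_top z2 c le_rfl)) (gp_zero z1 c le_rfl)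
        · exact absurd (key.1 (gp_top z1 c le_rfl)) (gp_zero z2 c le_rfl)
        · rw [z1, z2]
    simp only [Nat.card_Icc] at h1
    omega
  · have h1 : (s.filter P).card ≤ 2 * (Finset.Icc 1 c).card := by
      apply Finset.card_le_mul_card_image_of_maps_to (f := fun σ => gp c n (xs σ))
      · intro σ hσ
        have hσ' := (Finset.mem_filter.1 hσ).2
        simp only [Finset.mem_Icc]
        exact hσ'
      · intro g hg
        by_contra hcon
        push Not at hcon
        obtain ⟨σ, hσ, τ, hτ, ρ, hρ, h12, h13, h23⟩ := Finset.two_lt_card.1 hcon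
        simp only [Finset.mem_filter] at hσ hτ hρ
        obtain ⟨⟨h1, q1⟩, g1⟩ := hσ
        obtain ⟨⟨h2, q2⟩, g2⟩ := hτ
        obtain ⟨⟨h3, q3⟩, g3⟩ := hρ
        have hclose : ∀ α ∈ s, ∀ β ∈ s, P α → gp c n (xs α) = gp c n (xs β) →
            turn c n (xs β) < turn c n (xs α) + 4 ∧
            (turn c n (xs α)) % 2 = (turn c n (xs β)) % 2 := by
          intro α hα β hβ hP he
          have hgap := gap_eq (hag α hα β hβ) he
          have p1 := turn_parity (by omega) (hsp α hα)
          have p2 := turn_parity (by omega) (hsp β hβ)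
          have hd := hdir α hα β hβ
          have s1 := (turn_spec (by omega) (hsp α hα)).1
          have s2 := (turn_spec (by omega) (hsp β hβ)).1
          have hgc := hgap c le_rfl
          refine ⟨?_, by omega⟩
          apply turn_close (by omega) (hsp α hα) (hsp β hβ) hd (hag α hα β hβ) hgap
          · by_contra hno
            push Not at hno
            have : gp c n (xs α) = c + 1 := by
              apply gp_top'
              intro i hi
              have := hno i hi
              have := (hsp α hα).inj i (n-1) (by omega) (by omega) (by omega)
              omega
            have := hP.2
            omega
          · by_contra hno
            push Not at hno
            have : gp c n (xs α) = 0 := by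
              apply gp_zero'
              intro i hi
              have := hno i hi
              omega
            have := hP.1
            omega
        have a12 := hclose σ h1 τ h2 q1 (by rw [g1, g2])
        have a13 := hclose σ h1 ρ h3 q1 (by rw [g1, g3])
        have a21 := hclose τ h2 σ h1 q2 (by rw [g1, g2])
        have a23 := hclose τ h2 ρ h3 q2 (by rw [g2, g3])
        have a31 := hclose ρ h3 σ h1 q3 (by rw [g1, g3])
        have a32 := hclose ρ h3 τ h2 q3 (by rw [g2, g3])
        have n12 : turn c n (xs σ) ≠ turn c n (xs τ) := fun h => h12 (hinj σ h1 τ h2 (by rw [g1, g2]) h)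
        have n13 : turn c n (xs σ) ≠ turn c n (xs ρ) := fun h => h13 (hinj σ h1 ρ h3 (by rw [g1, g3]) h)
        have n23 : turn c n (xs τ) ≠ turn c n (xs ρ) := fun h => h23 (hinj τ h2 ρ h3 (by rw [g2, g3]) h)
        omega
    simpa using h1

theorem exists_restrict {n n' : ℕ} (hn : n' ≤ n) (σ : Equiv.Perm (Fin n)) :
    ∃ τ : Equiv.Perm (Fin n'), Ag (xs τ) (xs σ) 0 n' :=
  std (xs σ) (fun _ _ hi hj hij => xs_inj σ (by omega) (by omega) hij)

/-- Restriction of a layer ordering to the first few faces. -/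
noncomputable def restr {n n' : ℕ} (hn : n' ≤ n) (σ : Equiv.Perm (Fin n)) : Equiv.Perm (Fin n') :=
  (exists_restrict hn σ).choose

theorem restr_spec {n n' : ℕ} (hn : n' ≤ n) (σ : Equiv.Perm (Fin n)) :
    Ag (xs (restr hn σ)) (xs σ) 0 n' :=
  (exists_restrict hn σ).choose_spec

theorem restr_mem {up : ℕ → Prop} {n n' : ℕ} (hn : n' ≤ n) {σ : Equiv.Perm (Fin n)}
    (h : σ ∈ FF up n) : restr hn σ ∈ FF up n' := by
  rw [mem_FF] at *
  exact (h.mono hn).congr (restr_spec hn σ).symm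

theorem upper_step {up : ℕ → Prop} {c a : ℕ} (ha : 1 ≤ a)
    (hup : ∀ i, c ≤ i → i + 2 < c + 1 + a → (up (i+1) ↔ ¬ up i)) :
    (FF up (c+1+a)).card ≤ (a + 2 * c) * (FF up (c+1)).card := by
  classical
  apply Finset.card_le_mul_card_image_of_maps_to (f := restr (by omega))
  · intro σ hσ
    exact restr_mem _ hσ
  · intro b hb
    apply fiber_le ha rfl hup
    · intro σ hσ
      exact mem_FF.1 (Finset.mem_filter.1 hσ).1
    · intro σ hσ τ hτ
      have h1 := (Finset.mem_filter.1 hσ).2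
      have h2 := (Finset.mem_filter.1 hτ).2
      have s1 := restr_spec (n' := c+1) (by omega) σ
      have s2 := restr_spec (n' := c+1) (by omega) τ
      rw [h1] at s1
      rw [h2] at s2
      exact s1.symm.trans s2

theorem FF_one (up : ℕ → Prop) : (FF up 1).card = 1 := by
  have : FF up 1 = Finset.univ := by
    ext σ
    simp only [mem_FF, Finset.mem_univ, iff_true]
    refine ⟨fun i j hi hj hij => ?_, fun i hi => ?_, fun i j hi => ?_⟩ <;> omega
  rw [this]; simp
/-! ### Lower bound -/

/-- Insert a new face `n` right next to face `r`. -/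
def ins (x : ℕ → ℤ) (n r : ℕ) (e : ℤ) (i : ℕ) : ℤ := if i = n then 2 * x r + e else 2 * x i

theorem ins_self (x : ℕ → ℤ) (n r : ℕ) (e : ℤ) : ins x n r e n = 2 * x r + e := by simp [ins]

theorem ins_of_lt (x : ℕ → ℤ) {n i : ℕ} (r : ℕ) (e : ℤ) (h : i < n) :
    ins x n r e i = 2 * x i := by
  have : i ≠ n := by omega
  simp [ins, this]

theorem ins_ag (x : ℕ → ℤ) (n r : ℕ) (e : ℤ) : Ag (ins x n r e) x 0 n := by
  intro a b _ ha _ hb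
  rw [ins_of_lt x r e ha, ins_of_lt x r e hb]
  omega

theorem ins_VX {up : ℕ → Prop} {n r : ℕ} {x : ℕ → ℤ} {e : ℤ} (h : VX up n x)
    (he : e = 1 ∨ e = -1) (hn : 1 ≤ n)
    (hd : 2 * x (n-1) < 2 * x r + e ↔ up (n-1))
    (hc : ∀ i, i + 2 < n → i % 2 = (n-1) % 2 →
      (Bt (2 * x (n-1)) (2 * x i) (2 * x (i+1)) ↔ Bt (2 * x r + e) (2 * x i) (2 * x (i+1)))) :
    VX up (n+1) (ins x n r e) := by
  obtain ⟨p, rfl⟩ : ∃ p, n = p + 1 := ⟨n - 1, by omega⟩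
  simp only [Nat.add_sub_cancel] at hd hc
  have hl := fun i (hi : i < p + 1) => ins_of_lt x r e hi
  have hs := ins_self x (p+1) r e
  refine ⟨fun i j hi hj hij => ?_, fun i hi => ?_, fun i j hi hj hij => ?_⟩
  · rcases eq_or_ne i (p+1) with rfl | h1 <;> rcases eq_or_ne j (p+1) with rfl | h2
    · omega
    · rw [hs, hl j (by omega)]; omega
    · rw [hs, hl i (by omega)]; omega
    · rw [hl i (by omega), hl j (by omega)]
      have := h.inj i j (by omega) (by omega) hij
      omega
  · rcases eq_or_ne i p with rfl | h1
    · rw [hs, hl i (by omega)]; exact hd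
    · rw [hl i (by omega), hl (i+1) (by omega), ← h.dir i (by omega)]
      omega
  · rcases eq_or_ne i p with h1 | h1 <;> rcases eq_or_ne j p with h2 | h2
    · subst h2; subst h1; simp only [Bt]; omega
    · subst h1
      have h3 : j + 2 < i + 1 := by omega
      have := hc j h3 (by omega)
      rw [hs, hl i (by omega), hl j (by omega), hl (j+1) (by omega)]
      have n1 := h.inj i j (by omega) (by omega) (by omega)
      have n2 := h.inj i (j+1) (by omega) (by omega) (by omega)
      simp only [Bt] at this ⊢
      omega
    · subst h2
      have h3 : i + 2 < j + 1 := by omega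
      have := hc i h3 (by omega)
      rw [hs, hl j (by omega), hl i (by omega), hl (i+1) (by omega)]
      exact this
    · rw [hl i (by omega), hl (i+1) (by omega), hl j (by omega), hl (j+1) (by omega)]
      have := h.nc i j (by omega) (by omega) hij
      simp only [Bt] at this ⊢
      omega

theorem ext_adj {up : ℕ → Prop} {n : ℕ} {x : ℕ → ℤ} (h : VX up n x) (hn : 1 ≤ n) :
    ∃ y, VX up (n+1) y ∧ Ag y x 0 n ∧
      (∀ i, i < n → i ≠ n-1 → ¬ Bt (y i) (y (n-1)) (y n)) := by
  classical
  have key : ∀ e : ℤ, (e = 1 ∨ e = -1) → (2 * x (n-1) < 2 * x (n-1) + e ↔ up (n-1)) →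
      ∃ y, VX up (n+1) y ∧ Ag y x 0 n ∧
      (∀ i, i < n → i ≠ n-1 → ¬ Bt (y i) (y (n-1)) (y n)) := by
    intro e he hd
    refine ⟨ins x n (n-1) e, ins_VX h he hn hd ?_, ins_ag x n _ e, ?_⟩
    · intro i hi hp
      have n1 := h.inj i (n-1) (by omega) (by omega) (by omega)
      have n2 := h.inj (i+1) (n-1) (by omega) (by omega) (by omega)
      simp only [Bt]
      omega
    · intro i hi hne
      rw [ins_self, ins_of_lt x _ e hi, ins_of_lt x _ e (by omega)]
      simp only [Bt]
      omega
  by_cases hu : up (n-1)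
  · exact key 1 (Or.inl rfl) ⟨fun _ => hu, fun _ => by omega⟩
  · exact key (-1) (Or.inr rfl) ⟨fun hh => by omega, fun hh => absurd hh hu⟩

theorem ext_many {up : ℕ → Prop} {n : ℕ} {x : ℕ → ℤ} (h : VX up n x) (hn : 1 ≤ n) (k : ℕ) :
    ∃ y, VX up (n+k) y ∧ Ag y x 0 n ∧
      (1 ≤ k → ∀ i, i < n → i ≠ n-1 → ¬ Bt (y i) (y (n-1)) (y n)) := by
  induction k with
  | zero => exact ⟨x, h, fun a b _ _ _ _ => Iff.rfl, fun h => by omega⟩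
  | succ k ih =>
    rcases Nat.eq_zero_or_pos k with rfl | hk
    · obtain ⟨y, h1, h2, h3⟩ := ext_adj h hn
      exact ⟨y, h1, h2, fun _ => h3⟩
    · obtain ⟨y, h1, h2, h3⟩ := ih
      obtain ⟨z, g1, g2, -⟩ := ext_adj h1 (by omega)
      refine ⟨z, g1, (g2.mono (by omega) (by omega)).trans h2, fun _ i hi hne => ?_⟩
      have := h3 hk i hi hne
      have a1 := g2 i (n-1) (by omega) (by omega) (by omega) (by omega)
      have a2 := g2 (n-1) i (by omega) (by omega) (by omega) (by omega)
      have a3 := g2 i n (by omega) (by omega) (by omega) (by omega)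
      have a4 := g2 n i (by omega) (by omega) (by omega) (by omega)
      simp only [Bt] at this ⊢
      omega

theorem ext_ret {up : ℕ → Prop} {n r : ℕ} {x : ℕ → ℤ} (h : VX up n x)
    (hr : r + 2 < n) (hpar : (r+1) % 2 = n % 2)
    (hadj : ∀ i, i < n → i ≠ r+1 → i ≠ n-1 → ¬ Bt (x i) (x (r+1)) (x (n-1)))
    (hup : up (n-1) ↔ ¬ up r) (hside : up (n-1) ↔ x (n-1) < x (r+1)) :
    ∃ y, VX up (n+1) y ∧ Ag y x 0 n ∧
      (∀ i, i < n + 1 → i ≠ r → i ≠ n → ¬ Bt (y i) (y r) (y n)) ∧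
      (up (n-1) ↔ y r < y n) ∧ Bt (y (r+1)) (y (n-1)) (y n) := by
  classical
  have hdr := h.dir r (by omega)
  have n1 := h.inj r (r+1) (by omega) (by omega) (by omega)
  have n2 := h.inj r (n-1) (by omega) (by omega) (by omega)
  have n3 := h.inj (r+1) (n-1) (by omega) (by omega) (by omega)
  have har := hadj r (by omega) (by omega) (by omega)
  have key : ∀ e : ℤ, (e = 1 ∨ e = -1) → (e = 1 ↔ up (n-1)) →
    ∃ y, VX up (n+1) y ∧ Ag y x 0 n ∧
      (∀ i, i < n + 1 → i ≠ r → i ≠ n → ¬ Bt (y i) (y r) (y n)) ∧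
      (up (n-1) ↔ y r < y n) ∧ Bt (y (r+1)) (y (n-1)) (y n) := by
    intro e he heu
    have hx1 : x (n-1) < x (r+1) ↔ e = 1 := by rw [heu, hside]
    have hx2 : x r < x (r+1) ↔ ¬ e = 1 := by rw [heu, hdr, hup]; tauto
    refine ⟨ins x n r e, ins_VX h he (by omega) ?_ ?_, ins_ag x n _ e, ?_, ?_, ?_⟩
    · rw [← heu]
      simp only [Bt] at har
      omega
    · intro i hi hp
      rcases eq_or_ne i r with rfl | hir
      · simp only [Bt] at har ⊢
        omega
      · have a1 := hadj i (by omega) (by omega) (by omega)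
        have a2 := hadj (i+1) (by omega) (by omega) (by omega)
        have c1 := h.nc i r (by omega) (by omega) (by omega)
        have m1 := h.inj i (n-1) (by omega) (by omega) (by omega)
        have m2 := h.inj (i+1) (n-1) (by omega) (by omega) (by omega)
        have m3 := h.inj i (r+1) (by omega) (by omega) (by omega)
        have m4 := h.inj (i+1) (r+1) (by omega) (by omega) (by omega)
        have m5 := h.inj i r (by omega) (by omega) (by omega)
        have m6 := h.inj (i+1) r (by omega) (by omega) (by omega)
        have e1 : Bt (2 * x (n-1)) (2 * x i) (2 * x (i+1)) ↔ Bt (x (n-1)) (x i) (x (i+1)) := by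
          simp only [Bt]; omega
        have e2 : Bt (x (n-1)) (x i) (x (i+1)) ↔ Bt (x (r+1)) (x i) (x (i+1)) := by
          simp only [Bt] at a1 a2 ⊢; clear c1 e1; omega
        have e3 : Bt (x r) (x i) (x (i+1)) ↔ Bt (2 * x r + e) (2 * x i) (2 * x (i+1)) := by
          simp only [Bt]; clear c1 e1 e2 a1 a2; omega
        rw [e1, e2, ← c1, e3]
    · intro i hi h1 h2
      rw [ins_self, ins_of_lt x _ e (show i < n by omega), ins_of_lt x _ e (show r < n by omega)]
      simp only [Bt]
      omega
    · rw [ins_self, ins_of_lt x _ e (show r < n by omega), ← heu]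
      omega
    · rw [ins_self, ins_of_lt x _ e (show r + 1 < n by omega),
        ins_of_lt x _ e (show n - 1 < n by omega)]
      simp only [Bt] at har ⊢
      omega
  by_cases hu : up (n-1)
  · exact key 1 (Or.inl rfl) (by simp [hu])
  · exact key (-1) (Or.inr rfl) (by simp [hu])

theorem ret {up : ℕ → Prop} {c b : ℕ} {x0 : ℕ → ℤ} (h0 : VX up (c+1) x0) (hb : b ≤ c)
    (hrel : ∀ s, 1 ≤ s → s ≤ b → (up (c+s) ↔ ¬ up (c-s)) ∧ (up (c+s) ↔ ¬ up (c+s-1)))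
    (s : ℕ) (hs : 1 ≤ s) (hsb : s ≤ b + 1) :
    ∃ x, VX up (c+1+s) x ∧ Ag x x0 0 (c+1) ∧
      (∀ i, i < c+1+s → i ≠ c+1-s → i ≠ c+s → ¬ Bt (x i) (x (c+1-s)) (x (c+s))) ∧
      (up (c+s-1) ↔ x (c+1-s) < x (c+s)) ∧
      (∀ s', 1 ≤ s' → s' < s → Bt (x (c+1-s')) (x (c+s')) (x (c+s'+1))) := by
  induction s with
  | zero => omega
  | succ s ih =>
    rcases Nat.eq_zero_or_pos s with rfl | hspos
    · obtain ⟨y, h1, h2, h3⟩ := ext_adj h0 (by omega)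
      refine ⟨y, h1, h2, ?_, ?_, fun s' _ _ => by omega⟩
      · intro i hi hi1 hi2
        simp only [zero_add, Nat.add_sub_cancel] at hi1 h3 ⊢
        exact h3 i (by omega) (by omega)
      · simp only [zero_add, Nat.add_sub_cancel]
        exact (h1.dir c (by omega)).symm
    · obtain ⟨x, h1, h2, h3, h4, h5⟩ := ih hspos (by omega)
      obtain ⟨g1, g2⟩ := hrel s hspos (by omega)
      obtain ⟨r, hr⟩ : ∃ r, r + s = c := ⟨c - s, by omega⟩
      have e1 : c + 1 - s = r + 1 := by omega
      have e2 : c + 1 + s - 1 = c + s := by omega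
      have e3 : c - s = r := by omega
      rw [e1] at h3 h4
      rw [e3] at g1
      have hne := h1.inj (r+1) (c+s) (by omega) (by omega) (by omega)
      obtain ⟨y, k1, k2, k3, k4, k5⟩ := ext_ret (n := c+1+s) (r := r) h1 (by omega) (by omega)
        (by rw [e2]; exact h3) (by rw [e2]; exact g1)
        (by
          rw [e2, g2, h4]
          omega)
      rw [e2] at k4 k5
      have f1 : c + 1 - (s+1) = r := by omega
      have f2 : c + (s + 1) = c + 1 + s := by omega
      have f3 : c + s + 1 = c + 1 + s := by omega
      refine ⟨y, k1, (k2.mono (by omega) (by omega)).trans h2, ?_, ?_, ?_⟩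
      · rw [f1, f2]
        exact k3
      · rw [f1, f2, e2]
        exact k4
      · intro s' hs1 hs2
        rcases eq_or_ne s' s with rfl | hne'
        · rw [e1, f3]; exact k5
        · have := h5 s' hs1 (by omega)
          have q := fun u v (hu : u < c+1+s) (hv : v < c+1+s) =>
            k2 u v (by omega) hu (by omega) hv
          have q1 := q (c+1-s') (c+s') (by omega) (by omega)
          have q2 := q (c+s') (c+1-s') (by omega) (by omega)
          have q3 := q (c+1-s') (c+s'+1) (by omega) (by omega)
          have q4 := q (c+s'+1) (c+1-s') (by omega) (by omega)
          simp only [Bt] at this ⊢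
          rw [q1, q2, q3, q4]
          exact this

/-- The spiral: faces `s` and `s+1` are the two extremes. -/
def Spir (x : ℕ → ℤ) (s : ℕ) : Prop :=
  (∀ i, i ≤ s + 1 → x s ≤ x i ∧ x i ≤ x (s+1)) ∨ (∀ i, i ≤ s + 1 → x (s+1) ≤ x i ∧ x i ≤ x s)

theorem outw {up : ℕ → Prop} {x0 : ℕ → ℤ} (h0 : VX up 1 x0) (t : ℕ)
    (hrel : ∀ s, s < t → (up (s+1) ↔ ¬ up s)) :
    ∃ x, VX up (t+2) x ∧ Spir x t ∧ (∀ s', 1 ≤ s' → s' < t + 1 → Xtr 0 x (s'+1)) := by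
  classical
  induction t with
  | zero =>
    obtain ⟨y, h1, -, -⟩ := ext_adj h0 le_rfl
    refine ⟨y, h1, ?_, fun s' _ _ => by omega⟩
    rcases le_total (y 0) (y 1) with h | h
    · left
      intro i hi
      interval_cases i
      · exact ⟨le_rfl, h⟩
      · exact ⟨h, le_rfl⟩
    · right
      intro i hi
      interval_cases i
      · exact ⟨h, le_rfl⟩
      · exact ⟨le_rfl, h⟩
  | succ t ih =>
    obtain ⟨x, h1, h2, h3⟩ := ih (fun s hs => hrel s (by omega))
    have hr := hrel t (by omega)
    have hd := h1.dir t (by omega)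
    have hn := h1.inj t (t+1) (by omega) (by omega) (by omega)
    have key : ∀ e : ℤ, (e = 1 ∨ e = -1) → (e = 1 ↔ up (t+1)) →
        ∃ y, VX up (t+1+2) y ∧ Spir y (t+1) ∧
          (∀ s', 1 ≤ s' → s' < t + 1 + 1 → Xtr 0 y (s'+1)) := by
      intro e he heu
      have hx : x t < x (t+1) ↔ ¬ e = 1 := by rw [heu, hr, hd]; tauto
      have hold : ∀ i, i ≤ t + 1 → ins x (t+2) t e i = 2 * x i :=
        fun i hi => ins_of_lt x t e (by omega)
      have hnew := ins_self x (t+2) t e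
      have hrng : ∀ i, i ≤ t + 1 → (e = 1 → x (t+1) ≤ x i ∧ x i ≤ x t) ∧
          (¬ e = 1 → x t ≤ x i ∧ x i ≤ x (t+1)) := by
        intro i hi
        rcases h2 with h2 | h2
        · have a1 := h2 i hi
          have a2 := h2 t (by omega)
          omega
        · have a1 := h2 i hi
          have a2 := h2 t (by omega)
          omega
      refine ⟨ins x (t+2) t e, ?_, ?_, ?_⟩
      · apply ins_VX h1 he (by omega)
        · have : t + 2 - 1 = t + 1 := by omega
          rw [this, ← heu]
          omega
        · intro i hi hp
          have e1 : t + 2 - 1 = t + 1 := by omega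
          rw [e1]
          have a1 := hrng i (by omega)
          have a2 := hrng (i+1) (by omega)
          simp only [Bt]
          omega
      · have f1 : t + 1 + 1 = t + 2 := by omega
        have o1 := hold (t+1) le_rfl
        unfold Spir
        rw [f1]
        rcases he with he | he
        · left
          intro i hi
          have q := hrng (t+1) le_rfl
          rcases eq_or_ne i (t+2) with rfl | hi'
          · omega
          · have o2 := hold i (by omega)
            have a1 := hrng i (by omega)
            omega
        · right
          intro i hi
          have q := hrng (t+1) le_rfl
          rcases eq_or_ne i (t+2) with rfl | hi'
          · omega
          · have o2 := hold i (by omega)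
            have a1 := hrng i (by omega)
            omega
      · intro s' hs1 hs2
        rcases eq_or_ne s' (t+1) with rfl | hne
        · have f1 : t + 1 + 1 = t + 2 := by omega
          unfold Xtr
          rw [f1]
          rcases he with he | he
          · left
            intro i _ hi
            have o2 := hold i (by omega)
            have a1 := hrng i (by omega)
            omega
          · right
            intro i _ hi
            have o2 := hold i (by omega)
            have a1 := hrng i (by omega)
            omega
        · have := h3 s' hs1 (by omega)
          have o1 := hold (s'+1) (by omega)
          rcases this with h | h
          · left
            intro i _ hi
            have o2 := hold i (by omega)
            have := h i (by omega) hi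
            omega
          · right
            intro i _ hi
            have o2 := hold i (by omega)
            have := h i (by omega) hi
            omega
    by_cases hu : up (t+1)
    · exact key 1 (Or.inl rfl) (by simp [hu])
    · exact key (-1) (Or.inr rfl) (by simp [hu])

theorem lower_gen {up : ℕ → Prop} {c a B : ℕ} (Q : ℕ → (ℕ → ℤ) → Prop)
    (hQ : ∀ s x y, 1 ≤ s → s < B → Ag x y 0 (c+1+a) → Q s x → Q s y)
    (hex : ∀ x0, VX up (c+1) x0 → ∀ s, 1 ≤ s → s ≤ B → ∃ x, VX up (c+1+a) x ∧
      Ag x x0 0 (c+1) ∧ (∀ s', 1 ≤ s' → s' < s → Q s' x) ∧ (s < B → ¬ Q s x)) :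
    B * (FF up (c+1)).card ≤ (FF up (c+1+a)).card := by
  classical
  have h1 : ∀ p : Equiv.Perm (Fin (c+1)) × ℕ, p ∈ FF up (c+1) ×ˢ Finset.Icc 1 B →
      ∃ σ : Equiv.Perm (Fin (c+1+a)), VX up (c+1+a) (xs σ) ∧ Ag (xs σ) (xs p.1) 0 (c+1) ∧
        (∀ s', 1 ≤ s' → s' < p.2 → Q s' (xs σ)) ∧ (p.2 < B → ¬ Q p.2 (xs σ)) := by
    rintro ⟨τ, s⟩ hp
    rw [Finset.mem_product, Finset.mem_Icc, mem_FF] at hp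
    obtain ⟨hv, hs1, hs2⟩ := hp
    obtain ⟨x, g1, g2, g3, g4⟩ := hex (xs τ) hv s hs1 hs2
    obtain ⟨σ, hσ⟩ := std x g1.inj
    refine ⟨σ, g1.congr hσ.symm, (hσ.mono (by omega) (by omega)).trans g2, ?_, ?_⟩
    · intro s' q1 q2
      exact hQ s' x _ q1 (by omega) hσ.symm (g3 s' q1 q2)
    · intro q1 q2
      exact g4 q1 (hQ s _ x hs1 q1 hσ q2)
  choose! f hf using h1
  have hcard : (FF up (c+1) ×ˢ Finset.Icc 1 B).card = B * (FF up (c+1)).card := by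
    rw [Finset.card_product, Nat.card_Icc]
    simp [mul_comm]
  rw [← hcard]
  apply Finset.card_le_card_of_injOn f
  · intro p hp
    exact mem_FF.2 (hf p hp).1
  · intro p hp q hq hpq
    obtain ⟨-, a2, a3, a4⟩ := hf p hp
    obtain ⟨-, b2, b3, b4⟩ := hf q hq
    rw [hpq] at a2 a3 a4
    have e1 : p.1 = q.1 := perm_eq _ _ (a2.symm.trans b2)
    have hp' := Finset.mem_Icc.1 (Finset.mem_product.1 hp).2
    have hq' := Finset.mem_Icc.1 (Finset.mem_product.1 hq).2
    have e2 : p.2 = q.2 := by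
      rcases lt_trichotomy p.2 q.2 with h | h | h
      · exact absurd (b3 p.2 hp'.1 h) (a4 (by omega))
      · exact h
      · exact absurd (a3 q.2 hq'.1 h) (b4 (by omega))
    exact Prod.ext e1 e2

theorem lower_step {up : ℕ → Prop} {c a b : ℕ} (hb : b ≤ c)
    (hrel : ∀ s, 1 ≤ s → s ≤ b → s < a →
      (up (c+s) ↔ ¬ up (c-s)) ∧ (up (c+s) ↔ ¬ up (c+s-1))) :
    min (b+1) a * (FF up (c+1)).card ≤ (FF up (c+1+a)).card := by
  apply lower_gen (fun s x => Bt (x (c+1-s)) (x (c+s)) (x (c+s+1)))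
  · intro s x y h1 h2 hag hq
    have q := fun u v (hu : u < c+1+a) (hv : v < c+1+a) => hag u v (by omega) hu (by omega) hv
    have q1 := q (c+1-s) (c+s) (by omega) (by omega)
    have q2 := q (c+s) (c+1-s) (by omega) (by omega)
    have q3 := q (c+1-s) (c+s+1) (by omega) (by omega)
    have q4 := q (c+s+1) (c+1-s) (by omega) (by omega)
    simp only [Bt] at hq ⊢
    rw [← q1, ← q2, ← q3, ← q4]
    exact hq
  · intro x0 h0 s hs1 hs2
    obtain ⟨x, g1, g2, -, -, g5⟩ := ret (b := s - 1) h0 (by omega)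
      (fun s' p1 p2 => hrel s' p1 (by omega) (by omega)) s hs1 (by omega)
    obtain ⟨y, k1, k2, k3⟩ := ext_many g1 (by omega) (a - s)
    have e0 : c + 1 + s + (a - s) = c + 1 + a := by omega
    rw [e0] at k1
    refine ⟨y, k1, (k2.mono (by omega) (by omega)).trans g2, ?_, ?_⟩
    · intro s' p1 p2
      have := g5 s' p1 p2
      have q := fun u v (hu : u < c+1+s) (hv : v < c+1+s) => k2 u v (by omega) hu (by omega) hv
      have q1 := q (c+1-s') (c+s') (by omega) (by omega)
      have q2 := q (c+s') (c+1-s') (by omega) (by omega)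
      have q3 := q (c+1-s') (c+s'+1) (by omega) (by omega)
      have q4 := q (c+s'+1) (c+1-s') (by omega) (by omega)
      simp only [Bt] at this ⊢
      rw [q1, q2, q3, q4]
      exact this
    · intro hlt
      have := k3 (by omega) (c+1-s) (by omega) (by omega)
      have e1 : c + 1 + s - 1 = c + s := by omega
      have e2 : c + s + 1 = c + 1 + s := by omega
      rw [e1] at this
      rw [e2]
      exact this

theorem lower_base {up : ℕ → Prop} {a : ℕ} (hrel : ∀ s, s + 1 < a → (up (s+1) ↔ ¬ up s)) :
    a * (FF up (0+1)).card ≤ (FF up (0+1+a)).card := by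
  apply lower_gen (fun s x => Xtr 0 x (s+1))
  · intro s x y h1 h2 hag hq
    rcases hq with hq | hq
    · left
      intro i _ hi
      exact (hag i (s+1) (by omega) (by omega) (by omega) (by omega)).1 (hq i (by omega) hi)
    · right
      intro i _ hi
      exact (hag (s+1) i (by omega) (by omega) (by omega) (by omega)).1 (hq i (by omega) hi)
  · intro x0 h0 s hs1 hs2
    obtain ⟨t, rfl⟩ : ∃ t, s = t + 1 := ⟨s - 1, by omega⟩
    obtain ⟨x, g1, g2, g3⟩ := outw h0 t (fun s' hs' => hrel s' (by omega))
    obtain ⟨y, k1, k2, k3⟩ := ext_many g1 (by omega) (a - (t + 1))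
    have e0 : t + 2 + (a - (t+1)) = 0 + 1 + a := by omega
    rw [e0] at k1
    refine ⟨y, k1, ?_, ?_, ?_⟩
    · intro u v _ hu _ hv
      have h1 : u = 0 := by omega
      have h2 : v = 0 := by omega
      subst h1 h2
      simp
    · intro s' p1 p2
      rcases g3 s' p1 p2 with hq | hq
      · left
        intro i _ hi
        exact (k2 i (s'+1) (by omega) (by omega) (by omega) (by omega)).2 (hq i (by omega) hi)
      · right
        intro i _ hi
        exact (k2 (s'+1) i (by omega) (by omega) (by omega) (by omega)).2 (hq i (by omega) hi)
    · intro hlt hq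
      have hadj := k3 (by omega) t (by omega) (by omega)
      have e1 : t + 2 - 1 = t + 1 := by omega
      rw [e1] at hadj
      have d1 := k1.dir t (by omega)
      have d2 := k1.dir (t+1) (by omega)
      have hr := hrel t (by omega)
      have n1 := k1.inj t (t+1) (by omega) (by omega) (by omega)
      have n2 := k1.inj (t+1) (t+2) (by omega) (by omega) (by omega)
      have n3 := k1.inj t (t+2) (by omega) (by omega) (by omega)
      have f1 : t + 1 + 1 = t + 2 := by omega
      rw [f1] at d2
      simp only [Xtr, f1] at hq
      have hdd : y (t+1) < y (t+2) ↔ ¬ y t < y (t+1) := by rw [d2, hr, d1]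
      simp only [Bt] at hadj
      rcases hq with hq | hq
      · have a1 := hq t (by omega) (by omega)
        have a2 := hq (t+1) (by omega) (by omega)
        omega
      · have a1 := hq t (by omega) (by omega)
        have a2 := hq (t+1) (by omega) (by omega)
        omega

/-! ### Block assignments -/

theorem block_val {m : ℕ} {a : ℕ → ℕ} {i k : ℕ} (hi : i < m)
    (h1 : ∑ j ∈ Finset.range i, a j ≤ k) (h2 : k < ∑ j ∈ Finset.range (i+1), a j) :
    blockAssignment m a k = if Even i then MV.M else MV.V := by
  have : Nat.findGreatest (fun t => ∑ j ∈ Finset.range t, a j ≤ k) m = i := by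
    rw [Nat.findGreatest_eq_iff]
    refine ⟨hi.le, fun _ => h1, fun {n} hn _ hcon => ?_⟩
    have : ∑ j ∈ Finset.range (i+1), a j ≤ ∑ j ∈ Finset.range n, a j :=
      Finset.sum_le_sum_of_subset (Finset.range_mono (by omega))
    omega
  unfold blockAssignment
  rw [this]

theorem up_block {m : ℕ} {a : ℕ → ℕ} {i k : ℕ} (hi : i < m)
    (h1 : ∑ j ∈ Finset.range i, a j ≤ k) (h2 : k < ∑ j ∈ Finset.range (i+1), a j) :
    upOf (blockAssignment m a) k ↔ (i + k) % 2 = 1 := by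
  unfold upOf
  rw [block_val hi h1 h2]
  rcases Nat.even_or_odd i with h | h
  · simp only [h, if_true, true_and, reduceCtorEq, false_and, or_false, Nat.not_even_iff_odd]
    rw [Nat.even_iff] at h
    rw [Nat.odd_iff]
    omega
  · have h' : ¬ Even i := Nat.not_even_iff_odd.2 h
    simp only [h', if_false, true_and, reduceCtorEq, false_and, false_or, Nat.not_odd_iff_even]
    rw [Nat.odd_iff] at h
    rw [Nat.even_iff]
    omega

theorem bounds {m : ℕ} {a : ℕ → ℕ} (ha : ∀ i < m, 1 ≤ a i) (i : ℕ) (hi : i + 1 ≤ m) :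
    a 0 * ∏ i ∈ Finset.Ico 1 (i+1), min (a (i - 1) + 1) (a i) ≤
      (FF (upOf (blockAssignment m a)) (∑ j ∈ Finset.range (i+1), a j + 1)).card ∧
    (FF (upOf (blockAssignment m a)) (∑ j ∈ Finset.range (i+1), a j + 1)).card ≤
      a 0 * ∏ i ∈ Finset.Ico 1 (i+1), (a i + 2 * ∑ j ∈ Finset.range i, a j) := by
  set up := upOf (blockAssignment m a) with hup
  have hu : ∀ i, i < m → ∀ k, ∑ j ∈ Finset.range i, a j ≤ k →
      k < ∑ j ∈ Finset.range i, a j + a i → (up k ↔ (i + k) % 2 = 1) := by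
    intro i hi k h1 h2
    exact up_block hi h1 (by rw [Finset.sum_range_succ]; exact h2)
  induction i with
  | zero =>
    have h0 := hu 0 (by omega)
    simp only [Finset.range_zero, Finset.sum_empty, zero_add] at h0
    have e : ∑ j ∈ Finset.range (0+1), a j + 1 = 0 + 1 + a 0 := by simp; omega
    rw [e]
    simp only [zero_add, Finset.Ico_self, Finset.prod_empty, mul_one]
    have hF := FF_one up
    constructor
    · have := lower_base (up := up) (a := a 0) (fun s hs => by
        rw [h0 s (by omega) (by omega), h0 (s+1) (by omega) (by omega)]; omega)
      simpa [hF] using this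
    · have := upper_step (up := up) (c := 0) (a := a 0) (ha 0 (by omega)) (fun s _ hs => by
        rw [h0 s (by omega) (by omega), h0 (s+1) (by omega) (by omega)]; omega)
      simpa [hF] using this
  | succ i ih =>
    obtain ⟨l, u⟩ := ih (by omega)
    have hA := hu (i+1) (by omega)
    have hB := hu i (by omega)
    have hc : ∑ j ∈ Finset.range (i+1), a j = ∑ j ∈ Finset.range i, a j + a i :=
      Finset.sum_range_succ _ _
    have e : ∑ j ∈ Finset.range (i+1+1), a j + 1
        = ∑ j ∈ Finset.range (i+1), a j + 1 + a (i+1) := by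
      have := Finset.sum_range_succ a (i+1)
      omega
    rw [e, Finset.prod_Ico_succ_top (b := i+1) (by omega),
      Finset.prod_Ico_succ_top (b := i+1) (by omega),
      Nat.add_sub_cancel, ← mul_assoc, ← mul_assoc]
    set c := ∑ j ∈ Finset.range (i+1), a j with hcdef
    have hi1 := ha i (by omega)
    constructor
    · have := lower_step (up := up) (c := c) (a := a (i+1)) (b := a i) (by omega)
        (fun s h1 h2 h3 => by
          have u1 := hA (c+s) (by omega) (by omega)
          have u2 := hB (c-s) (by omega) (by omega)
          have u3 := hA (c+s-1) (by omega) (by omega)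
          rw [u1, u2, u3]
          omega)
      refine le_trans ?_ this
      rw [mul_comm]
      exact Nat.mul_le_mul_left _ l
    · have := upper_step (up := up) (c := c) (a := a (i+1)) (ha (i+1) (by omega))
        (fun s h1 h2 => by
          rw [hA s (by omega) (by omega), hA (s+1) (by omega) (by omega)]; omega)
      refine le_trans this ?_
      rw [mul_comm]
      exact Nat.mul_le_mul_right _ u

theorem stmt16 (m : ℕ) (hm : 1 ≤ m) (a : ℕ → ℕ) (ha : ∀ i < m, 1 ≤ a i) :
    a 0 * ∏ i ∈ Finset.Ico 1 m, min (a (i - 1) + 1) (a i) ≤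
      foldCount (1 + ∑ j ∈ Finset.range m, a j) (blockAssignment m a) ∧
    foldCount (1 + ∑ j ∈ Finset.range m, a j) (blockAssignment m a) ≤
      a 0 * ∏ i ∈ Finset.Ico 1 m, (a i + 2 * ∑ j ∈ Finset.range i, a j) := by
  have h := bounds ha (m - 1) (by omega)
  rw [Nat.sub_add_cancel hm] at h
  rw [foldCount_eq, add_comm 1]
  exact h
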